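/- Let K be any field, and let G_23 ⊆ S_8 be the subgroup generated by the permutations Θ = (1,2,3,4,5,6,7,8) and Φ = (1,2,4)(5,6,8); G_23 has order 48 and is isomorphic to GL(2,3). Then the fixed field K(x_1,…,x_8)^{G_23} is K-rational. -/

import Mathlib

noncomputable section

/-- The rational function field `K(x_i : i ∈ I)` over `K`, realized as the fraction field
of the multivariate polynomial ring. -/
abbrev RFF (K : Type) [Field K] (I : Type) := FractionRing (MvPolynomial I K)

/-- The image of the variable `x_i` in the rational function field `K(x_i : i ∈ I)`. -/
noncomputable def Xvar (K : Type) [Field K] (I : Type) (i : I) : RFF K I :=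
  algebraMap (MvPolynomial I K) (RFF K I) (MvPolynomial.X i)

/-- Permutations of the variables as `K`-algebra automorphisms of the polynomial ring. -/
def renameHom (K : Type) [Field K] (I : Type) :
    Equiv.Perm I →* (MvPolynomial I K ≃ₐ[K] MvPolynomial I K) where
  toFun σ := MvPolynomial.renameEquiv K σ
  map_one' := MvPolynomial.renameEquiv_refl K
  map_mul' σ τ := (MvPolynomial.renameEquiv_trans K τ σ).symm

/-- The action of permutations of the variables on `K(x_i : i ∈ I)` by `K`-automorphisms,
determined by `σ(x_i) = x_{σ(i)}`. -/
noncomputable def permHom (K : Type) [Field K] (I : Type) :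
    Equiv.Perm I →* (RFF K I ≃ₐ[K] RFF K I) :=
  (IsFractionRing.fieldEquivOfAlgEquivHom K (RFF K I)).comp (renameHom K I)

/-- The fixed field `K(x_i : i ∈ I)^G` of a group `G` of permutations of the variables. -/
noncomputable def fixedSub (K : Type) [Field K] (I : Type) (G : Subgroup (Equiv.Perm I)) :
    IntermediateField K (RFF K I) :=
  IntermediateField.fixedField (G.map (permHom K I))

/-- An extension `L/K` is `K`-rational if it is purely transcendental over `K`, i.e. generated
by finitely many algebraically independent elements. -/
def IsRatExt (K : Type) [Field K] (L : Type*) [Field L] [Algebra K L] : Prop :=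
  ∃ (n : ℕ) (t : Fin n → L), AlgebraicIndependent K t ∧
    IntermediateField.adjoin K (Set.range t) = ⊤

/-!
It suffices to find eight invariants `t` such that `K(x₁,…,x₈)` has degree at most `48 = |G₂₃|`
over `K(t)`: then `K(t)` is the whole fixed field, and `t` is algebraically independent since the
transcendence degree is eight. Four of the invariants are power sums `∑ s_i Y_i^k`, where `G₂₃`
permutes the sums `s_i = x_i + x_{i+4}` and the `Y_i` in the same way; once the `Y_i` are known, the
`s_i` are recovered from a Vandermonde system. The other four generate the invariants of `G₂₃` on
four elements complementing the `s_i`.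

If `2 ≠ 0`, these elements are the differences `y_i = x_i - x_{i+4}`, read as a quaternion, and
`G₂₃` acts on the row sums and on the diagonal of its rotation matrix. The basic invariants satisfy
one relation, which a change of generators makes linear in one of them. The degree is at most
`48 = 6 · 4 · 2`.

If `2 = 0`, these elements are the fractions `u_i = x_i / (x_i + x_{i+4})`, permuted up to addition
of `1`. The invariants of the quaternion subgroup are permuted by `S₃`, and the Artin-Schreier
resolvent of their cubic polynomial yields a rational parametrization. The degree is at most
`48 = 3 · 2 · 4 · 2`.
-/

section FieldExtensions

variable {K L : Type*} [Field K] [Field L] [Algebra K L]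

theorem rank_le_mul_of_isRoot {E : IntermediateField K L} {n : ℕ} (c : Fin n → L)
    (hc : ∀ i, c i ∈ E) {θ : L} (hθ : θ ^ n + ∑ i, c i * θ ^ (i : ℕ) = 0) {d : ℕ}
    (h : ∀ F : IntermediateField K L, E ≤ F → θ ∈ F → Module.rank F L ≤ d) :
    Module.rank E L ≤ (n * d : ℕ) := by
  let p : Polynomial E :=
    Polynomial.X ^ n + ∑ i : Fin n, Polynomial.C ⟨c i, hc i⟩ * Polynomial.X ^ (i : ℕ)
  have hdeg : Polynomial.degree
      (∑ i : Fin n, Polynomial.C (⟨c i, hc i⟩ : E) * Polynomial.X ^ (i : ℕ)) < (n : WithBot ℕ) :=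
    Polynomial.degree_sum_fin_lt fun i => (⟨c i, hc i⟩ : E)
  have hp : p.Monic := Polynomial.monic_X_pow_add hdeg
  have hroot : Polynomial.aeval θ p = 0 := by
    simpa [p, IntermediateField.algebraMap_apply] using hθ
  have hint : IsIntegral E θ := ⟨p, hp, hroot⟩
  have hsimple : Module.rank E (IntermediateField.adjoin E {θ}) ≤ n := by
    have := IntermediateField.adjoin.finiteDimensional hint
    rw [← Module.finrank_eq_rank, IntermediateField.adjoin.finrank hint, Nat.cast_le]
    refine (Polynomial.natDegree_le_natDegree (minpoly.min E θ hp hroot)).trans ?_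
    rw [Polynomial.natDegree_eq_of_degree_eq (Polynomial.degree_add_eq_left_of_degree_lt
      (by rwa [Polynomial.degree_X_pow])), Polynomial.natDegree_X_pow]
  have htop : Module.rank (IntermediateField.adjoin E {θ}) L ≤ d :=
    h ((IntermediateField.adjoin E {θ}).restrictScalars K)
      (fun y hy => (IntermediateField.adjoin E {θ}).algebraMap_mem ⟨y, hy⟩)
      (IntermediateField.mem_adjoin_simple_self E θ)
  rw [← rank_mul_rank E (IntermediateField.adjoin E {θ}) L, Nat.cast_mul]
  exact mul_le_mul' hsimple htop

open scoped IntermediateField.algebraAdjoinAdjoin in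
theorem isAlgebraic_algebraAdjoin (S : Set L)
    [h : Algebra.IsAlgebraic (IntermediateField.adjoin K S) L] :
    Algebra.IsAlgebraic (Algebra.adjoin K S) L :=
  (IsFractionRing.comap_isAlgebraic_iff (A := Algebra.adjoin K S)
    (K := IntermediateField.adjoin K S) (C := L)).2 h

theorem mem_of_mul_mem {S : Type*} [SetLike S L] [SubfieldClass S L] {F : S} {a b : L}
    (ha : a ≠ 0) (haF : a ∈ F) (h : a * b ∈ F) : b ∈ F := by
  rw [← mul_div_cancel_left₀ b ha]
  exact div_mem h haF

theorem mem_of_sum_mul_pow_mem {S : Type*} [SetLike S L] [SubfieldClass S L] {F : S} {n : ℕ}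
    {s Y : Fin n → L} (hY : Function.Injective Y) (hYF : ∀ i, Y i ∈ F)
    (h : ∀ k : Fin n, ∑ i, s i * Y i ^ (k : ℕ) ∈ F) (i : Fin n) : s i ∈ F := by
  let v : Fin n → F := fun j => ⟨Y j, hYF j⟩
  have hv : Function.Injective v := fun a b hab => hY (congrArg Subtype.val hab)
  let ℓ : Polynomial F := Lagrange.basis Finset.univ v i
  have hℓ : ∀ j, ∑ k : Fin n, (ℓ.coeff k : L) * Y j ^ (k : ℕ) = if j = i then 1 else 0 := by
    intro j
    have heval : ((ℓ.eval (v j) : F) : L) = if j = i then 1 else 0 := by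
      split_ifs with hji
      · rw [hji, Lagrange.eval_basis_self hv.injOn (Finset.mem_univ i)]; rfl
      · rw [Lagrange.eval_basis_of_ne (Ne.symm hji) (Finset.mem_univ j)]; rfl
    have hlt : ℓ.natDegree < n := by
      have := Lagrange.natDegree_basis hv.injOn (Finset.mem_univ i)
      rw [this, Finset.card_univ, Fintype.card_fin]
      have := i.isLt
      omega
    rw [← heval, Polynomial.eval_eq_sum_range' hlt, ← Fin.sum_univ_eq_sum_range
      (fun k => ℓ.coeff k * v j ^ k)]
    push_cast
    rfl
  have hs : s i = ∑ k : Fin n, (ℓ.coeff k : L) * ∑ j, s j * Y j ^ (k : ℕ) := by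
    calc s i = ∑ j, s j * ∑ k : Fin n, (ℓ.coeff k : L) * Y j ^ (k : ℕ) := by simp [hℓ]
      _ = _ := by
        simp only [Finset.mul_sum]
        rw [Finset.sum_comm]
        exact Finset.sum_congr rfl fun k _ => Finset.sum_congr rfl fun j _ => by ring
  rw [hs]
  exact sum_mem fun k _ => mul_mem (ℓ.coeff k).2 (h k)

theorem sum_mul_pow_of_perm {ι R E : Type*} [Fintype ι] [CommSemiring R] [FunLike E R R]
    [RingHomClass E R R] (φ : E) (π : Equiv.Perm ι) {s Y : ι → R} (hs : ∀ i, φ (s i) = s (π i))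
    (hY : ∀ i, φ (Y i) = Y (π i)) (k : ℕ) :
    φ (∑ i, s i * Y i ^ k) = ∑ i, s i * Y i ^ k := by
  simp only [map_sum, map_mul, map_pow, hs, hY]
  exact Equiv.sum_comp π fun i => s i * Y i ^ k

end FieldExtensions

section PermutationAction

variable {K : Type} [Field K]

theorem permHom_Xvar {I : Type} (σ : Equiv.Perm I) (i : I) :
    permHom K I σ (Xvar K I i) = Xvar K I (σ i) := by
  simp [permHom, Xvar, renameHom]

theorem permHom_injective (I : Type) : Function.Injective (permHom K I) := by
  intro σ τ h
  ext i
  have hi : Xvar K I (σ i) = Xvar K I (τ i) := by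
    rw [← permHom_Xvar, ← permHom_Xvar, h]
  exact MvPolynomial.X_injective (IsFractionRing.injective (MvPolynomial I K) (RFF K I) hi)

theorem eq_top_of_Xvar_mem {I : Type} {F : IntermediateField K (RFF K I)}
    (h : ∀ i, Xvar K I i ∈ F) : F = ⊤ := by
  have hpoly (p : MvPolynomial I K) : algebraMap _ (RFF K I) p ∈ F := by
    induction p using MvPolynomial.induction_on with
    | C a => exact F.algebraMap_mem a
    | add p q hp hq => rw [map_add]; exact add_mem hp hq
    | mul_X p i hp => rw [map_mul]; exact mul_mem hp (h i)
  refine eq_top_iff.2 fun z _ => ?_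
  obtain ⟨a, b, -, rfl⟩ := IsFractionRing.div_surjective (MvPolynomial I K) z
  exact div_mem (hpoly a) (hpoly b)

theorem mem_fixedSub_closure {I : Type} {S : Set (Equiv.Perm I)} {z : RFF K I}
    (h : ∀ σ ∈ S, permHom K I σ z = z) : z ∈ fixedSub K I (Subgroup.closure S) := by
  rw [fixedSub, IntermediateField.mem_fixedField_iff]
  rintro _ ⟨g, hg, rfl⟩
  induction hg using Subgroup.closure_induction with
  | mem g hg => exact h g hg
  | one => simp
  | mul a b _ _ ha hb => rw [map_mul, AlgEquiv.mul_apply, hb, ha]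
  | inv a _ ha => rw [map_inv]; exact (AlgEquiv.symm_apply_eq _).2 ha.symm

theorem finrank_fixedSub {I : Type} [Finite I] (G : Subgroup (Equiv.Perm I)) :
    Module.finrank (fixedSub K I G) (RFF K I) = Nat.card G := by
  have : Finite (G.map (permHom K I)) := Set.Finite.image _ (Set.toFinite (G : Set (Equiv.Perm I)))
  have := Fintype.ofFinite (G.map (permHom K I))
  have hcard : Module.finrank (fixedSub K I G) (RFF K I) = Fintype.card (G.map (permHom K I)) :=
    FixedPoints.finrank_eq_card (G.map (permHom K I)) (RFF K I)
  rw [hcard, ← Nat.card_eq_fintype_card]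
  exact (Nat.card_congr (G.equivMapOfInjective _ (permHom_injective I)).toEquiv).symm

theorem algebraicIndependent_of_isAlgebraic_adjoin {n : ℕ} (t : Fin n → RFF K (Fin n))
    [Algebra.IsAlgebraic (IntermediateField.adjoin K (Set.range t)) (RFF K (Fin n))] :
    AlgebraicIndependent K t := by
  have := isAlgebraic_algebraAdjoin (K := K) (Set.range t)
  have hX : AlgebraicIndependent K (Xvar K (Fin n)) :=
    (MvPolynomial.algebraicIndependent_X (Fin n) K).map'
      (f := IsScalarTower.toAlgHom K (MvPolynomial (Fin n) K) (RFF K (Fin n)))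
      (IsFractionRing.injective _ _)
  exact (Algebra.IsAlgebraic.isTranscendenceBasis_of_le_trdeg_of_finite K t
    hX.cardinalMk_le_trdeg).1

theorem isRatExt_fixedSub {n : ℕ} {G : Subgroup (Equiv.Perm (Fin n))} (t : Fin n → RFF K (Fin n))
    (ht : ∀ i, t i ∈ fixedSub K (Fin n) G)
    (hrank : Module.rank (IntermediateField.adjoin K (Set.range t)) (RFF K (Fin n)) ≤ Nat.card G) :
    IsRatExt K (fixedSub K (Fin n) G) := by
  set E := IntermediateField.adjoin K (Set.range t) with hE
  have hfin : FiniteDimensional E (RFF K (Fin n)) :=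
    Module.rank_lt_aleph0_iff.1 (hrank.trans_lt (Cardinal.natCast_lt_aleph0))
  have hEG : E = fixedSub K (Fin n) G := by
    refine IntermediateField.eq_of_le_of_finrank_le' ?_ ?_
    · rw [hE, IntermediateField.adjoin_le_iff]
      rintro _ ⟨i, rfl⟩
      exact ht i
    · rw [finrank_fixedSub]
      exact Module.finrank_le_of_rank_le hrank
  refine ⟨n, fun i => ⟨t i, ht i⟩, ?_, ?_⟩
  · have := Algebra.IsAlgebraic.of_finite E (RFF K (Fin n))
    exact (algebraicIndependent_of_isAlgebraic_adjoin t).of_comp (fixedSub K (Fin n) G).val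
  · apply IntermediateField.map_injective (fixedSub K (Fin n) G).val
    rw [IntermediateField.adjoin_map, ← Set.range_comp]
    refine hEG.trans ?_
    simp [← AlgHom.fieldRange_eq_map]

end PermutationAction

section Blocks

open Equiv

/-- The generator `Θ = (1,2,3,4,5,6,7,8)` of `G₂₃`, on the indices `0, …, 7`. -/
abbrev theta : Perm (Fin 8) := finRotate 8

/-- The generator `Φ = (1,2,4)(5,6,8)` of `G₂₃`, on the indices `0, …, 7`. -/
abbrev phi : Perm (Fin 8) :=
  (swap (0 : Fin 8) 1 * swap 1 3) * (swap (4 : Fin 8) 5 * swap 5 7)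

/-- The group `G₂₃`. -/
abbrev G23 : Subgroup (Perm (Fin 8)) := Subgroup.closure {theta, phi}

/-- The word `Θ^a Φ^b (Θ²ΦΘ)^c`; these 48 words exhaust `G₂₃`. -/
def groupWord (w : Fin 8 × Fin 3 × Fin 2) : Perm (Fin 8) :=
  theta ^ (w.1 : ℕ) * phi ^ (w.2.1 : ℕ) * (theta ^ 2 * phi * theta) ^ (w.2.2 : ℕ)

theorem groupWord_injective : Function.Injective groupWord := by decide +kernel

theorem groupWord_mem (w : Fin 8 × Fin 3 × Fin 2) : groupWord w ∈ G23 := by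
  have hΘ : theta ∈ G23 := Subgroup.subset_closure (by simp)
  have hΦ : phi ∈ G23 := Subgroup.subset_closure (by simp)
  exact mul_mem (mul_mem (pow_mem hΘ _) (pow_mem hΦ _))
    (pow_mem (mul_mem (mul_mem (pow_mem hΘ _) hΦ) hΘ) _)

theorem card_G23_ge : 48 ≤ Nat.card G23 := by
  have := Nat.card_le_card_of_injective (fun w => (⟨groupWord w, groupWord_mem w⟩ : G23))
    fun a b h => groupWord_injective (congrArg Subtype.val h)
  simpa using this

variable (K : Type) [Field K]

/-- The variable `x_{i+1}` of the first block of four variables. -/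
def loVar (i : Fin 4) : RFF K (Fin 8) := Xvar K (Fin 8) (Fin.castAdd 4 i)

/-- The variable `x_{i+5}` of the second block of four variables. -/
def hiVar (i : Fin 4) : RFF K (Fin 8) := Xvar K (Fin 8) (Fin.natAdd 4 i)

/-- The sums `s_i = x_i + x_{i+4}`, which `G₂₃` permutes. -/
def pairSum (i : Fin 4) : RFF K (Fin 8) := loVar K i + hiVar K i

variable {K}

theorem theta_loVar : permHom K (Fin 8) theta ∘ loVar K =
    ![loVar K 1, loVar K 2, loVar K 3, hiVar K 0] := by
  funext i; fin_cases i <;> exact permHom_Xvar _ _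

theorem theta_hiVar : permHom K (Fin 8) theta ∘ hiVar K =
    ![hiVar K 1, hiVar K 2, hiVar K 3, loVar K 0] := by
  funext i; fin_cases i <;> exact permHom_Xvar _ _

theorem phi_loVar : permHom K (Fin 8) phi ∘ loVar K =
    ![loVar K 1, loVar K 3, loVar K 2, loVar K 0] := by
  funext i; fin_cases i <;> exact permHom_Xvar _ _

theorem phi_hiVar : permHom K (Fin 8) phi ∘ hiVar K =
    ![hiVar K 1, hiVar K 3, hiVar K 2, hiVar K 0] := by
  funext i; fin_cases i <;> exact permHom_Xvar _ _

theorem theta_pairSum (i : Fin 4) :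
    permHom K (Fin 8) theta (pairSum K i) = pairSum K (finRotate 4 i) := by
  have hlo := congrFun (theta_loVar (K := K)) i
  have hhi := congrFun (theta_hiVar (K := K)) i
  simp only [Function.comp_apply] at hlo hhi
  rw [pairSum, map_add, hlo, hhi]
  fin_cases i <;> first | rfl | exact add_comm _ _

theorem phi_pairSum (i : Fin 4) :
    permHom K (Fin 8) phi (pairSum K i) = pairSum K ((swap 0 1 * swap 1 3 : Perm (Fin 4)) i) := by
  have hlo := congrFun (phi_loVar (K := K)) i
  have hhi := congrFun (phi_hiVar (K := K)) i
  simp only [Function.comp_apply] at hlo hhi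
  rw [pairSum, map_add, hlo, hhi]
  fin_cases i <;> rfl

/-- The family `z` generates `K(x₁,…,x₈)` together with the sums `s_i`. -/
def GeneratesWithSums (z : Fin 4 → RFF K (Fin 8)) : Prop :=
  ∀ F : IntermediateField K (RFF K (Fin 8)), (∀ i, z i ∈ F) → (∀ i, pairSum K i ∈ F) → F = ⊤

theorem generatesWithSums_of_loVar_mem {z : Fin 4 → RFF K (Fin 8)}
    (h : ∀ (F : IntermediateField K (RFF K (Fin 8))) (i : Fin 4), z i ∈ F → pairSum K i ∈ F →
      loVar K i ∈ F) : GeneratesWithSums z := by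
  intro F hz hs
  have hlo i : loVar K i ∈ F := h F i (hz i) (hs i)
  have hhi i : hiVar K i ∈ F := by
    rw [← add_sub_cancel_left (loVar K i) (hiVar K i)]
    exact sub_mem (hs i) (hlo i)
  exact eq_top_of_Xvar_mem fun i => Fin.addCases (m := 4) (n := 4) hlo hhi i

theorem GeneratesWithSums.algebraicIndependent_append {z : Fin 4 → RFF K (Fin 8)}
    (hz : GeneratesWithSums z) :
    AlgebraicIndependent K (Fin.append z (pairSum K) : Fin 8 → RFF K (Fin 8)) := by
  have htop : IntermediateField.adjoin K (Set.range (Fin.append z (pairSum K))) = ⊤ := by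
    refine hz _ (fun i => IntermediateField.subset_adjoin _ _ ⟨Fin.castAdd 4 i, ?_⟩)
      fun i => IntermediateField.subset_adjoin _ _ ⟨Fin.natAdd 4 i, ?_⟩
    · exact Fin.append_left _ _ i
    · exact Fin.append_right _ _ i
  have : Algebra.IsAlgebraic (IntermediateField.adjoin K (Set.range (Fin.append z (pairSum K))))
      (RFF K (Fin 8)) := by
    rw [htop]
    exact ⟨fun x => isAlgebraic_algebraMap (⟨x, trivial⟩ : (⊤ : IntermediateField K _))⟩
  exact algebraicIndependent_of_isAlgebraic_adjoin _

theorem GeneratesWithSums.algebraicIndependent {z : Fin 4 → RFF K (Fin 8)}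
    (hz : GeneratesWithSums z) : AlgebraicIndependent K z := by
  convert hz.algebraicIndependent_append.comp (Fin.castAdd 4) (Fin.castAdd_injective 4 4) using 1
  exact funext fun i => (Fin.append_left z (pairSum K) i).symm

theorem GeneratesWithSums.aeval_ne_zero {z : Fin 4 → RFF K (Fin 8)} (hz : GeneratesWithSums z)
    {S : Type*} [CommRing S] [Algebra K S] (a : Fin 4 → S) {p : MvPolynomial (Fin 4) K}
    (ha : MvPolynomial.aeval a p ≠ 0) : MvPolynomial.aeval z p ≠ 0 := by
  intro h
  exact ha (by rw [hz.algebraicIndependent.eq_zero_of_aeval_eq_zero p h, map_zero])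

theorem pairSum_ne_zero (i : Fin 4) : pairSum K i ≠ 0 := by
  have hlo : GeneratesWithSums (loVar K) := generatesWithSums_of_loVar_mem fun _ _ h _ => h
  have := hlo.algebraicIndependent_append.ne_zero (Fin.natAdd 4 i)
  rwa [Fin.append_right] at this

/-- The four invariants `c` together with the power sums `∑ s_i Y_i^k` generate a field over which
`K(x₁,…,x₈)` has degree at most `48 = |G₂₃|`. -/
theorem isRatExt_of_degree_le {z c Y : Fin 4 → RFF K (Fin 8)} (hz : GeneratesWithSums z)
    (hcΘ : ∀ i, permHom K (Fin 8) theta (c i) = c i)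
    (hcΦ : ∀ i, permHom K (Fin 8) phi (c i) = c i)
    (hYΘ : ∀ i, permHom K (Fin 8) theta (Y i) = Y (finRotate 4 i))
    (hYΦ : ∀ i, permHom K (Fin 8) phi (Y i) = Y ((swap 0 1 * swap 1 3 : Perm (Fin 4)) i))
    (hYz : ∀ i, Y i ∈ IntermediateField.adjoin K (Set.range z)) (hY : Function.Injective Y)
    (hdeg : ∀ F : IntermediateField K (RFF K (Fin 8)), (∀ i, c i ∈ F) →
      (∀ F', F ≤ F' → (∀ i, z i ∈ F') → Module.rank F' (RFF K (Fin 8)) ≤ 1) →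
        Module.rank F (RFF K (Fin 8)) ≤ 48) :
    IsRatExt K (fixedSub K (Fin 8) G23) := by
  let w : Fin 4 → RFF K (Fin 8) := fun k => ∑ i, pairSum K i * Y i ^ (k : ℕ)
  refine isRatExt_fixedSub (Fin.append c w : Fin 8 → RFF K (Fin 8)) ?_ ?_
  · intro i
    refine mem_fixedSub_closure ?_
    rintro σ (rfl | rfl) <;> refine Fin.addCases (m := 4) (n := 4) (fun j => ?_) (fun j => ?_) i
    · rw [Fin.append_left]; exact hcΘ j
    · rw [Fin.append_right]
      exact sum_mul_pow_of_perm (permHom K (Fin 8) theta) _ theta_pairSum hYΘ j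
    · rw [Fin.append_left]; exact hcΦ j
    · rw [Fin.append_right]
      exact sum_mul_pow_of_perm (permHom K (Fin 8) phi) _ phi_pairSum hYΦ j
  have hmem (i : Fin 8) : Fin.append c w i ∈
      IntermediateField.adjoin K (Set.range (Fin.append c w : Fin 8 → RFF K (Fin 8))) :=
    IntermediateField.subset_adjoin _ _ ⟨i, rfl⟩
  refine (hdeg _ (fun i => ?_) fun F hF hzF => ?_).trans (by exact_mod_cast card_G23_ge)
  · rw [← Fin.append_left c w i]; exact hmem _
  · have hYF i : Y i ∈ F :=
      IntermediateField.adjoin_le_iff.2 (Set.range_subset_iff.2 hzF) (hYz i)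
    have hsF i : pairSum K i ∈ F := mem_of_sum_mul_pow_mem hY hYF (fun k => by
      rw [show ∑ i, pairSum K i * Y i ^ (k : ℕ) = Fin.append c w (Fin.natAdd 4 k) from
        (Fin.append_right c w k).symm]
      exact hF (hmem _)) i
    rw [hz F hzF hsF]
    simp

end Blocks

section Rotation

variable {R : Type*} [CommRing R]

/-- The squared norm of the quaternion with coordinates `y`, whose real part is `y 2`. -/
def quatNorm (y : Fin 4 → R) : R := y 0 ^ 2 + y 1 ^ 2 + y 2 ^ 2 + y 3 ^ 2

/-- The diagonal of the rotation matrix of the quaternion `y`, scaled by `quatNorm y`. -/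
def rotDiag (y : Fin 4 → R) : Fin 3 → R :=
  ![y 0 ^ 2 + y 2 ^ 2 - y 1 ^ 2 - y 3 ^ 2, y 1 ^ 2 + y 2 ^ 2 - y 3 ^ 2 - y 0 ^ 2,
    y 3 ^ 2 + y 2 ^ 2 - y 0 ^ 2 - y 1 ^ 2]

/-- The product `a_i b_i`, where `2 a_i` and `2 b_i` are the off-diagonal entries in the `i`-th row
of the scaled rotation matrix. -/
def rotOffDiagMul (y : Fin 4 → R) : Fin 3 → R :=
  ![(y 0 * y 1 + y 2 * y 3) * (y 0 * y 3 - y 1 * y 2),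
    (y 1 * y 3 + y 2 * y 0) * (y 1 * y 0 - y 3 * y 2),
    (y 3 * y 0 + y 2 * y 1) * (y 3 * y 1 - y 0 * y 2)]

/-- The row sums of the scaled rotation matrix of the quaternion `y`. -/
def rotSum (y : Fin 4 → R) : Fin 3 → R :=
  ![rotDiag y 0 + 2 * (y 0 * y 1 + y 2 * y 3) + 2 * (y 0 * y 3 - y 1 * y 2),
    rotDiag y 1 + 2 * (y 1 * y 3 + y 2 * y 0) + 2 * (y 1 * y 0 - y 3 * y 2),
    rotDiag y 2 + 2 * (y 3 * y 0 + y 2 * y 1) + 2 * (y 3 * y 1 - y 0 * y 2)]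

/-- Values of the basic invariants of `G₂₃` on the differences `y_i = x_i - x_{i+4}`: in terms of
the row sums `V_i` and the diagonal entries `D_i` of the scaled rotation matrix of `y`, they are
the norm `Q`, `P = V₁V₂V₃`, `e = ∑ V_i²V_j²`, `h = ∑ D_iV_i` and `n = ∑ D_iV_i³ - 3Q²h`. -/
@[ext]
structure RotInvariants (R : Type*) where
  (Q P e h n : R)

/-- The basic invariants of the quaternion `y`. -/
def rotInvariants (y : Fin 4 → R) : RotInvariants R where
  Q := quatNorm y
  P := rotSum y 0 * rotSum y 1 * rotSum y 2
  e := rotSum y 0 ^ 2 * rotSum y 1 ^ 2 + rotSum y 1 ^ 2 * rotSum y 2 ^ 2 +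
    rotSum y 0 ^ 2 * rotSum y 2 ^ 2
  h := ∑ i, rotDiag y i * rotSum y i
  n := ∑ i, rotDiag y i * rotSum y i ^ 3 - 3 * quatNorm y ^ 2 * ∑ i, rotDiag y i * rotSum y i

theorem sum_rotSum_sq (y : Fin 4 → R) : ∑ i, rotSum y i ^ 2 = 3 * quatNorm y ^ 2 := by
  simp only [Fin.sum_univ_three, rotSum, rotDiag, quatNorm, Matrix.cons_val]
  ring

theorem rotDiag_rotSum_rotSum (y : Fin 4 → R) :
    rotDiag y 0 * rotSum y 1 * rotSum y 2 + rotDiag y 1 * rotSum y 0 * rotSum y 2 +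
      rotDiag y 2 * rotSum y 0 * rotSum y 1 =
    (rotInvariants y).P + (rotInvariants y).Q * (rotInvariants y).h - (rotInvariants y).Q ^ 3 := by
  simp only [Fin.sum_univ_three, rotInvariants, rotSum, rotDiag, quatNorm, Matrix.cons_val]
  ring

theorem rotDiag_rotDiag_rotSum (y : Fin 4 → R) :
    2 * (rotDiag y 0 * rotDiag y 1 * rotSum y 2 + rotDiag y 0 * rotDiag y 2 * rotSum y 1 +
      rotDiag y 1 * rotDiag y 2 * rotSum y 0) =
    (rotInvariants y).P + 2 * (rotInvariants y).Q * ∑ i, rotDiag y i ^ 2 -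
      (rotInvariants y).Q ^ 3 := by
  simp only [Fin.sum_univ_three, rotInvariants, rotSum, rotDiag, quatNorm, Matrix.cons_val]
  ring

theorem eight_mul_rotOffDiagMul (y : Fin 4 → R) (i : Fin 3) :
    8 * rotOffDiagMul y i = (rotSum y i - rotDiag y i) ^ 2 - quatNorm y ^ 2 + rotDiag y i ^ 2 := by
  fin_cases i <;> simp [rotOffDiagMul, rotSum, rotDiag, quatNorm] <;> ring

theorem rotInvariants_theta (y : Fin 4 → R) :
    rotInvariants ![y 1, y 2, y 3, -y 0] = rotInvariants y := by
  have hQ : quatNorm ![y 1, y 2, y 3, -y 0] = quatNorm y := by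
    simp only [quatNorm, Matrix.cons_val]; ring
  have hD : rotDiag ![y 1, y 2, y 3, -y 0] = ![-rotDiag y 0, rotDiag y 2, -rotDiag y 1] := by
    ext i; fin_cases i <;> simp [rotDiag] <;> ring
  have hV : rotSum ![y 1, y 2, y 3, -y 0] = ![-rotSum y 0, rotSum y 2, -rotSum y 1] := by
    ext i; fin_cases i <;> simp [rotSum, rotDiag] <;> ring
  ext <;> simp only [rotInvariants, hQ, hD, hV, Fin.sum_univ_three, Matrix.cons_val] <;> ring

theorem rotInvariants_phi (y : Fin 4 → R) :
    rotInvariants ![y 1, y 3, y 2, y 0] = rotInvariants y := by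
  have hQ : quatNorm ![y 1, y 3, y 2, y 0] = quatNorm y := by
    simp only [quatNorm, Matrix.cons_val]; ring
  have hD : rotDiag ![y 1, y 3, y 2, y 0] = ![rotDiag y 1, rotDiag y 2, rotDiag y 0] := by
    ext i; fin_cases i <;> simp [rotDiag]
  have hV : rotSum ![y 1, y 3, y 2, y 0] = ![rotSum y 1, rotSum y 2, rotSum y 0] := by
    ext i; fin_cases i <;> simp [rotSum, rotDiag]
  ext <;> simp only [rotInvariants, hQ, hD, hV, Fin.sum_univ_three, Matrix.cons_val] <;> ring

end Rotation

section RotationRelation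

namespace RotInvariants

variable {R : Type*} [CommRing R] (I : RotInvariants R)

/-- Minus the discriminant of the cubic polynomial with the roots `V_i²`. -/
def disc : R :=
  27 * I.P ^ 4 + 4 * I.e ^ 3 - 54 * I.e * I.P ^ 2 * I.Q ^ 2 + 108 * I.P ^ 2 * I.Q ^ 6 -
    9 * I.e ^ 2 * I.Q ^ 4

/-- The numerator of the generator `w = wNum / disc`. It is the linear form in `n` which completes
the square in the quadratic relation `RotInvariants.relation` between the basic invariants. -/
def wNum : R :=
  2 * I.e * (I.e + 3 * I.P * I.Q) * I.n +
    3 * I.e * (I.e * I.Q ^ 2 + I.P ^ 2 + 4 * I.P * I.Q ^ 3) * (I.h - I.Q ^ 2) +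
    4 * I.e ^ 2 * I.P * I.Q - 9 * I.P ^ 4 + 18 * I.e * I.P ^ 2 * I.Q ^ 2 -
    36 * I.P ^ 2 * I.Q ^ 6 + 3 * I.e ^ 2 * I.Q ^ 4

end RotInvariants

open RotInvariants

variable {R : Type*} [CommRing R] (y : Fin 4 → R)

theorem rotSum_sq_add_add :
    rotSum y 0 ^ 2 + rotSum y 1 ^ 2 + rotSum y 2 ^ 2 = 3 * (rotInvariants y).Q ^ 2 := by
  rw [← Fin.sum_univ_three (rotSum y · ^ 2), sum_rotSum_sq, rotInvariants]

theorem rotInvariants_disc : (rotInvariants y).disc =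
    -((rotSum y 0 ^ 2 - rotSum y 1 ^ 2) * (rotSum y 0 ^ 2 - rotSum y 2 ^ 2) *
      (rotSum y 1 ^ 2 - rotSum y 2 ^ 2)) ^ 2 := by
  have hV := rotSum_sq_add_add y
  simp only [disc, rotInvariants] at hV ⊢
  generalize quatNorm y = Q, rotSum y 0 = a, rotSum y 1 = b, rotSum y 2 = c at hV ⊢
  linear_combination (18 * (a ^ 2 * b ^ 2 + b ^ 2 * c ^ 2 + a ^ 2 * c ^ 2) * (a * b * c) ^ 2 -
    4 * (a * b * c) ^ 2 * (9 * Q ^ 4 + 3 * Q ^ 2 * (a ^ 2 + b ^ 2 + c ^ 2) +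
      (a ^ 2 + b ^ 2 + c ^ 2) ^ 2) +
    (a ^ 2 * b ^ 2 + b ^ 2 * c ^ 2 + a ^ 2 * c ^ 2) ^ 2 *
      (3 * Q ^ 2 + (a ^ 2 + b ^ 2 + c ^ 2))) * hV

theorem sum_quadratic_mul_quadratic {X₀ X₁ X₂ s₁ s₂ s₃ : R} (h₁ : X₀ + X₁ + X₂ = s₁)
    (h₂ : X₀ * X₁ + X₁ * X₂ + X₀ * X₂ = s₂) (h₃ : X₀ * X₁ * X₂ = s₃) (a b c : R) :
    (a * X₀ ^ 2 + b * X₀ + c) * (a * X₁ ^ 2 + b * X₁ + c) * X₂ * ((X₂ - X₀) * (X₂ - X₁)) +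
      (a * X₀ ^ 2 + b * X₀ + c) * (a * X₂ ^ 2 + b * X₂ + c) * X₁ * ((X₁ - X₀) * (X₁ - X₂)) +
      (a * X₁ ^ 2 + b * X₁ + c) * (a * X₂ ^ 2 + b * X₂ + c) * X₀ * ((X₀ - X₁) * (X₀ - X₂)) =
    s₁ ^ 3 * c ^ 2 + s₁ ^ 2 * s₂ * b * c + 2 * s₁ ^ 2 * s₃ * a * c + s₁ ^ 2 * s₃ * b ^ 2 +
      s₁ * s₂ * s₃ * a * b - 4 * s₁ * s₂ * c ^ 2 - 3 * s₁ * s₃ ^ 2 * a ^ 2 +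
      3 * s₁ * s₃ * b * c + s₂ ^ 2 * s₃ * a ^ 2 - 4 * s₂ ^ 2 * b * c - 6 * s₂ * s₃ * a * c -
      3 * s₂ * s₃ * b ^ 2 - 9 * s₃ ^ 2 * a * b + 9 * s₃ * c ^ 2 := by
  subst h₁ h₂ h₃
  ring

theorem sum_quadratic_sq {X₀ X₁ X₂ s₁ s₂ s₃ : R} (h₁ : X₀ + X₁ + X₂ = s₁)
    (h₂ : X₀ * X₁ + X₁ * X₂ + X₀ * X₂ = s₂) (h₃ : X₀ * X₁ * X₂ = s₃) (a b c : R) :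
    (a * X₀ ^ 2 + b * X₀ + c) ^ 2 * X₁ * X₂ * (X₁ - X₂) ^ 2 +
      (a * X₁ ^ 2 + b * X₁ + c) ^ 2 * X₀ * X₂ * (X₀ - X₂) ^ 2 +
      (a * X₂ ^ 2 + b * X₂ + c) ^ 2 * X₀ * X₁ * (X₀ - X₁) ^ 2 =
    s₁ ^ 2 * s₂ * c ^ 2 - 4 * s₁ ^ 2 * s₃ ^ 2 * a ^ 2 + 4 * s₁ ^ 2 * s₃ * b * c +
      s₁ * s₂ ^ 2 * s₃ * a ^ 2 + 2 * s₁ * s₂ * s₃ * a * c + s₁ * s₂ * s₃ * b ^ 2 -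
      12 * s₁ * s₃ ^ 2 * a * b + 3 * s₁ * s₃ * c ^ 2 + 4 * s₂ ^ 2 * s₃ * a * b -
      4 * s₂ ^ 2 * c ^ 2 + 3 * s₂ * s₃ ^ 2 * a ^ 2 - 12 * s₂ * s₃ * b * c -
      18 * s₃ ^ 2 * a * c - 9 * s₃ ^ 2 * b ^ 2 := by
  subst h₁ h₂ h₃
  ring

theorem rotDiag_mul_rotSum_mul (i j k : Fin 3) (hijk : [i, j, k].Nodup) :
    rotDiag y i * rotSum y i *
        ((rotSum y i ^ 2 - rotSum y j ^ 2) * (rotSum y i ^ 2 - rotSum y k ^ 2)) =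
      (rotInvariants y).h * (rotSum y i ^ 2) ^ 2 + (rotInvariants y).n * rotSum y i ^ 2 +
        (rotInvariants y).P *
          ((rotInvariants y).P + (rotInvariants y).Q * (rotInvariants y).h -
            (rotInvariants y).Q ^ 3) := by
  rw [← rotDiag_rotSum_rotSum]
  have hV := rotSum_sq_add_add y
  simp only [rotInvariants, Fin.sum_univ_three] at hV ⊢
  generalize quatNorm y = Q at hV ⊢
  rw [← hV]
  revert hijk
  fin_cases i <;> fin_cases j <;> fin_cases k <;> simp <;> ring

theorem RotInvariants.relation [IsDomain R] (hP : (rotInvariants y).P ≠ 0)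
    (hPQ : (rotInvariants y).P ≠ (rotInvariants y).Q ^ 3) :
    let I := rotInvariants y
    I.e ^ 2 * I.disc * (I.h - I.Q ^ 2) ^ 2 - 2 * I.disc * I.wNum - 3 * I.wNum ^ 2 +
      I.disc * (3 * I.e ^ 2 * I.Q ^ 4 - 36 * I.P ^ 2 * I.Q ^ 6 - 2 * I.e ^ 3 -
        2 * I.e ^ 2 * I.P * I.Q + 18 * I.e * I.P ^ 2 * I.Q ^ 2 - 9 * I.P ^ 4) = 0 := by
  have h₁ := rotSum_sq_add_add y
  have h₂ : rotSum y 0 ^ 2 * rotSum y 1 ^ 2 + rotSum y 1 ^ 2 * rotSum y 2 ^ 2 +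
    rotSum y 0 ^ 2 * rotSum y 2 ^ 2 = (rotInvariants y).e := rfl
  have h₃ : rotSum y 0 ^ 2 * rotSum y 1 ^ 2 * rotSum y 2 ^ 2 = (rotInvariants y).P ^ 2 := by
    rw [rotInvariants]; ring
  set I := rotInvariants y
  have hprod := sum_quadratic_mul_quadratic h₁ h₂ h₃ I.h I.n
    (I.P * (I.P + I.Q * I.h - I.Q ^ 3))
  have hsq := sum_quadratic_sq h₁ h₂ h₃ I.h I.n (I.P * (I.P + I.Q * I.h - I.Q ^ 3))
  rw [← rotDiag_mul_rotSum_mul y 0 1 2 (by decide), ← rotDiag_mul_rotSum_mul y 1 0 2 (by decide),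
    ← rotDiag_mul_rotSum_mul y 2 0 1 (by decide)] at hprod hsq
  have hdisc := calc I.disc * (I.P ^ 2 * (I.P - I.Q ^ 3))
    _ = _ := by
      rw [rotInvariants_disc]
      have hDD := rotDiag_rotDiag_rotSum y
      rw [Fin.sum_univ_three] at hDD
      rw [show I.P = rotSum y 0 * rotSum y 1 * rotSum y 2 from rfl] at hDD ⊢
      generalize rotSum y 0 = a, rotSum y 1 = b, rotSum y 2 = c at hDD ⊢
      linear_combination (a * b * c) ^ 2 *
        ((a ^ 2 - b ^ 2) * (a ^ 2 - c ^ 2) * (b ^ 2 - c ^ 2)) ^ 2 * hDD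
    _ = _ := congrArg₂ (fun a b => 2 * I.P * a + 2 * I.Q * b) hprod hsq
  refine (mul_eq_zero.1 ?_).resolve_left (mul_ne_zero (pow_ne_zero 2 hP) (sub_ne_zero.2 hPQ))
  rw [disc] at hdisc
  simp only [disc, wNum]
  linear_combination (-2 * I.e ^ 2 * (I.e + 3 * I.P * I.Q)) * hdisc

end RotationRelation

section OddGenerators

namespace RotInvariants

variable {L : Type*} [Field L] (I : RotInvariants L)

/-- The second generator of the field of invariants in odd characteristic. -/
def m : L := I.e / I.P

/-- The third generator of the field of invariants in odd characteristic. -/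
def w : L := I.wNum / I.disc

/-- The fourth generator of the field of invariants in odd characteristic. -/
def p : L := I.m * (I.h - I.Q ^ 2) - 3 * I.P * (1 + 3 * I.w)

/-- The generators `Q, m, w, p` of the field of invariants in odd characteristic. -/
def generators : Fin 4 → L := ![I.Q, I.m, I.w, I.p]

/-- The coefficient of `P` in the linear equation `RotInvariants.P_mul_den` for `P` over
`K(Q, m, w, p)`. -/
def den : L :=
  6 * I.p * (1 + 3 * I.w) - (2 * I.w + 3 * I.w ^ 2) * (4 * I.m ^ 3 - 54 * I.m * I.Q ^ 2) -
    2 * I.m ^ 3 - 2 * I.m ^ 2 * I.Q + 18 * I.m * I.Q ^ 2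

/-- The numerator of `den` over the denominator `P³ disc²`. -/
def denNum {R : Type*} [CommRing R] (I : RotInvariants R) : R :=
  6 * I.P ^ 2 * (I.e * (I.h - I.Q ^ 2) * I.disc - 3 * I.P ^ 2 * (I.disc + 3 * I.wNum)) *
      (I.disc + 3 * I.wNum) -
    (2 * I.wNum * I.disc + 3 * I.wNum ^ 2) * (4 * I.e ^ 3 - 54 * I.e * I.P ^ 2 * I.Q ^ 2) -
    2 * I.e ^ 3 * I.disc ^ 2 - 2 * I.e ^ 2 * I.P * I.Q * I.disc ^ 2 +
    18 * I.e * I.P ^ 2 * I.Q ^ 2 * I.disc ^ 2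

variable {I}

/-- In the relation divided by `P²`, the terms quadratic in `P` cancel. -/
theorem P_mul_den (hP : I.P ≠ 0) (hdisc : I.disc ≠ 0)
    (h : I.e ^ 2 * I.disc * (I.h - I.Q ^ 2) ^ 2 - 2 * I.disc * I.wNum - 3 * I.wNum ^ 2 +
      I.disc * (3 * I.e ^ 2 * I.Q ^ 4 - 36 * I.P ^ 2 * I.Q ^ 6 - 2 * I.e ^ 3 -
        2 * I.e ^ 2 * I.P * I.Q + 18 * I.e * I.P ^ 2 * I.Q ^ 2 - 9 * I.P ^ 4) = 0) :
    I.P * I.den = (36 * I.Q ^ 6 - 3 * I.m ^ 2 * I.Q ^ 4) * (1 + 3 * I.w) ^ 2 - I.p ^ 2 := by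
  have he : I.e = I.m * I.P := (div_mul_cancel₀ _ hP).symm
  have hw : I.wNum = I.w * I.disc := (div_mul_cancel₀ _ hdisc).symm
  have hq : I.disc = I.P ^ 2 * (27 * I.P ^ 2 + 4 * I.m ^ 3 * I.P - 54 * I.m * I.P * I.Q ^ 2 +
      108 * I.Q ^ 6 - 9 * I.m ^ 2 * I.Q ^ 4) := by
    rw [disc, he]; ring
  refine mul_left_cancel₀ (mul_ne_zero hdisc (pow_ne_zero 2 hP)) ?_
  rw [hw, he] at h
  rw [den, p]
  linear_combination h + I.disc * (2 * I.w + 3 * I.w ^ 2) * hq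

theorem den_mul (hP : I.P ≠ 0) (hdisc : I.disc ≠ 0) :
    I.den * (I.P ^ 3 * I.disc ^ 2) = I.denNum := by
  have he : I.e = I.m * I.P := (div_mul_cancel₀ _ hP).symm
  have hw : I.wNum = I.w * I.disc := (div_mul_cancel₀ _ hdisc).symm
  rw [denNum, den, p, he, hw]
  ring

theorem mem_of_generators_mem {S : Type*} [SetLike S L] [SubfieldClass S L] {F : S}
    (h2 : (2 : L) ≠ 0) (hP : I.P ≠ 0) (he : I.e ≠ 0) (hePQ : I.e + 3 * I.P * I.Q ≠ 0)
    (hdisc : I.disc ≠ 0) (hden : I.den ≠ 0)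
    (hPden : I.P * I.den =
      (36 * I.Q ^ 6 - 3 * I.m ^ 2 * I.Q ^ 4) * (1 + 3 * I.w) ^ 2 - I.p ^ 2)
    (hF : ∀ i, I.generators i ∈ F) : I.P ∈ F ∧ I.e ∈ F ∧ I.h ∈ F ∧ I.n ∈ F := by
  obtain ⟨hQF, hmF, hwF, hpF⟩ : I.Q ∈ F ∧ I.m ∈ F ∧ I.w ∈ F ∧ I.p ∈ F :=
    ⟨hF 0, hF 1, hF 2, hF 3⟩
  have hem : I.e = I.m * I.P := (div_mul_cancel₀ _ hP).symm
  have hm : I.m ≠ 0 := fun h => he (by rw [hem, h, zero_mul])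
  have hPF : I.P ∈ F := by
    refine mem_of_mul_mem hden ?_ ((mul_comm _ _).trans hPden ▸ ?_)
    · rw [den]
      apply_rules [add_mem, sub_mem, mul_mem, pow_mem, ofNat_mem, one_mem]
    · apply_rules [add_mem, sub_mem, mul_mem, pow_mem, ofNat_mem, one_mem]
  have heF : I.e ∈ F := hem ▸ mul_mem hmF hPF
  have hhF : I.h ∈ F := by
    refine mem_of_mul_mem hm hmF ?_
    rw [show I.m * I.h = I.p + 3 * I.P * (1 + 3 * I.w) + I.m * I.Q ^ 2 by rw [p]; ring]
    apply_rules [add_mem, mul_mem, pow_mem, ofNat_mem, one_mem]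
  refine ⟨hPF, heF, hhF, mem_of_mul_mem (mul_ne_zero (mul_ne_zero h2 he) hePQ) ?_ ?_⟩
  · apply_rules [add_mem, mul_mem, ofNat_mem]
  have hw : I.wNum = I.w * I.disc := (div_mul_cancel₀ _ hdisc).symm
  have hn : 2 * I.e * (I.e + 3 * I.P * I.Q) * I.n =
      I.w * I.disc - ({ I with n := 0 } : RotInvariants L).wNum := by
    rw [← hw, wNum, wNum]
    ring
  rw [hn, wNum, disc]
  dsimp only
  refine sub_mem (mul_mem hwF ?_) (add_mem (sub_mem (add_mem (sub_mem ?_ ?_) ?_) ?_) ?_) <;>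
    apply_rules [add_mem, sub_mem, mul_mem, pow_mem, ofNat_mem, zero_mem]

end RotInvariants

end OddGenerators

section OddTower

section Membership

variable {L S : Type*} [Field L] [SetLike S L] [SubfieldClass S L] {F : S}

theorem mem_of_add_mul_mem (h2 : (2 : L) ≠ 0) {a b u v : L} (ha : a ∈ F) (hb : b ∈ F)
    (hu : u ^ 2 ∈ F) (hv : v ^ 2 ∈ F) (h : a * u + b * v ∈ F) (ha0 : a ≠ 0)
    (h0 : a * u + b * v ≠ 0) : u ∈ F := by
  have hsq : 2 * a * (a * u + b * v) * u =
      (a * u + b * v) ^ 2 + a ^ 2 * u ^ 2 - b ^ 2 * v ^ 2 := by ring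
  refine mem_of_mul_mem (mul_ne_zero (mul_ne_zero h2 ha0) h0) ?_ (hsq ▸ ?_)
  · exact mul_mem (mul_mem (ofNat_mem F 2) ha) h
  · apply_rules [add_mem, sub_mem, mul_mem, pow_mem]

variable {y : Fin 4 → L}

theorem sq_mem_of_rotDiag_mem (h2 : (2 : L) ≠ 0) (hQ : quatNorm y ∈ F)
    (hD : ∀ i, rotDiag y i ∈ F) (i : Fin 4) : y i ^ 2 ∈ F := by
  have h4 : (4 : L) ≠ 0 := by
    rw [show (4 : L) = 2 ^ 2 by norm_num]
    exact pow_ne_zero 2 h2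
  refine mem_of_mul_mem h4 (ofNat_mem F 4) ?_
  have h : 4 * y i ^ 2 = quatNorm y +
      ![rotDiag y 0 - rotDiag y 1 - rotDiag y 2, rotDiag y 1 - rotDiag y 0 - rotDiag y 2,
        rotDiag y 0 + rotDiag y 1 + rotDiag y 2, rotDiag y 2 - rotDiag y 0 - rotDiag y 1] i := by
    fin_cases i <;> simp [quatNorm, rotDiag] <;> ring
  rw [h]
  refine add_mem hQ ?_
  fin_cases i <;> apply_rules [add_mem, sub_mem, hD]

theorem mul_mem_of_rotSum_mem (h2 : (2 : L) ≠ 0) (hQ : quatNorm y ∈ F)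
    (hD : ∀ i, rotDiag y i ∈ F) (hV : ∀ i, rotSum y i ∈ F) (hN : ∀ i, rotOffDiagMul y i ≠ 0)
    (hy : Function.Injective (y ^ 2)) (i : Fin 4) : y i * y 2 ∈ F := by
  have h8 : (8 : L) ≠ 0 := by
    rw [show (8 : L) = 2 ^ 3 by norm_num]
    exact pow_ne_zero 3 h2
  have hNF i : rotOffDiagMul y i ∈ F := by
    refine mem_of_mul_mem h8 (ofNat_mem F 8) ?_
    rw [eight_mul_rotOffDiagMul]
    apply_rules [add_mem, sub_mem, pow_mem]
  have hsq := sq_mem_of_rotDiag_mem h2 hQ hD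
  have hmul i j : (y i * y j) ^ 2 ∈ F := by rw [mul_pow]; exact mul_mem (hsq i) (hsq j)
  have hsub i j : y i ^ 2 - y j ^ 2 ∈ F := sub_mem (hsq i) (hsq j)
  have hne {i j : Fin 4} (hij : i ≠ j) : y i ^ 2 - y j ^ 2 ≠ 0 := sub_ne_zero.2 (hy.ne hij)
  have key {i j k l : Fin 4} (r : Fin 3) (hij : i ≠ j)
      (h : (y i ^ 2 - y j ^ 2) * (y k * y 2) + (y l ^ 2 - y 2 ^ 2) * (y i * y j) =
        rotOffDiagMul y r) : y k * y 2 ∈ F :=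
    mem_of_add_mul_mem h2 (hsub i j) (hsub l 2) (hmul k 2) (hmul i j) (h ▸ hNF r) (hne hij)
      (h ▸ hN r)
  fin_cases i
  · exact key (i := 3) (j := 1) (l := 0) 0 (by decide) (by simp [rotOffDiagMul]; ring)
  · exact key (i := 0) (j := 3) (l := 1) 1 (by decide) (by simp [rotOffDiagMul]; ring)
  · exact (sq (y 2)) ▸ hsq 2
  · exact key (i := 1) (j := 0) (l := 3) 2 (by decide) (by simp [rotOffDiagMul]; ring)

theorem sum_rotDiag_mul_rotSum_pow_five {R : Type*} [CommRing R] (y : Fin 4 → R) :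
    ∑ i, rotDiag y i * rotSum y i ^ 5 =
      3 * (rotInvariants y).Q ^ 2 *
          ((rotInvariants y).n + 3 * (rotInvariants y).Q ^ 2 * (rotInvariants y).h) -
        (rotInvariants y).e * (rotInvariants y).h + (rotInvariants y).P *
          ((rotInvariants y).P + (rotInvariants y).Q * (rotInvariants y).h -
            (rotInvariants y).Q ^ 3) := by
  rw [← rotDiag_rotSum_rotSum]
  have hV := rotSum_sq_add_add y
  simp only [rotInvariants, Fin.sum_univ_three] at hV ⊢
  rw [← hV]
  ring

theorem rotDiag_mem (hQ : (rotInvariants y).Q ∈ F) (hP : (rotInvariants y).P ∈ F)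
    (he : (rotInvariants y).e ∈ F) (hh : (rotInvariants y).h ∈ F) (hn : (rotInvariants y).n ∈ F)
    (hV : ∀ i, rotSum y i ∈ F) (hV0 : ∀ i, rotSum y i ≠ 0)
    (hinj : Function.Injective (rotSum y ^ 2)) (i : Fin 3) : rotDiag y i ∈ F := by
  have hsum (k : Fin 3) : ∑ i, rotDiag y i * rotSum y i * (rotSum y ^ 2) i ^ (k : ℕ) ∈ F := by
    fin_cases k
    · simpa [rotInvariants] using hh
    · have h3 : ∑ i, rotDiag y i * rotSum y i ^ 3 =
        (rotInvariants y).n + 3 * (rotInvariants y).Q ^ 2 * (rotInvariants y).h := by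
        simp [rotInvariants]
      simp only [Pi.pow_apply, pow_one, mul_assoc, ← pow_succ']
      rw [h3]
      apply_rules [add_mem, mul_mem, pow_mem, ofNat_mem]
    · simp only [Pi.pow_apply, ← pow_mul, mul_assoc, ← pow_succ']
      rw [sum_rotDiag_mul_rotSum_pow_five]
      apply_rules [add_mem, sub_mem, mul_mem, pow_mem, ofNat_mem]
  refine mem_of_mul_mem (hV0 i) (hV i) (mul_comm (rotDiag y i) _ ▸ ?_)
  exact mem_of_sum_mul_pow_mem (s := fun i => rotDiag y i * rotSum y i) hinj
    (fun j => pow_mem (hV j) 2) hsum i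

end Membership

end OddTower

section OddDegree

/-- The inequations on `y` needed in the computation of the degree over the field generated by
`(rotInvariants y).generators`. -/
structure IsGeneric {L : Type*} [Field L] (y : Fin 4 → L) : Prop where
  P_ne_zero : (rotInvariants y).P ≠ 0
  P_ne_Q_pow : (rotInvariants y).P ≠ (rotInvariants y).Q ^ 3
  e_ne_zero : (rotInvariants y).e ≠ 0
  e_add_ne_zero : (rotInvariants y).e + 3 * (rotInvariants y).P * (rotInvariants y).Q ≠ 0
  disc_ne_zero : (rotInvariants y).disc ≠ 0
  den_ne_zero : (rotInvariants y).den ≠ 0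
  rotOffDiagMul_ne_zero (i : Fin 3) : rotOffDiagMul y i ≠ 0
  sq_injective : Function.Injective (y ^ 2)
  ne_zero : y 2 ≠ 0

namespace IsGeneric

variable {L : Type*} [Field L] {y : Fin 4 → L}

theorem rotSum_ne_zero (hy : IsGeneric y) (i : Fin 3) : rotSum y i ≠ 0 := by
  have h := hy.P_ne_zero
  simp only [rotInvariants, mul_ne_zero_iff] at h
  fin_cases i
  exacts [h.1.1, h.1.2, h.2]

theorem rotSum_sq_injective (hy : IsGeneric y) : Function.Injective (rotSum y ^ 2) := by
  have h := hy.disc_ne_zero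
  rw [rotInvariants_disc, neg_ne_zero, pow_ne_zero_iff two_ne_zero] at h
  simp only [mul_ne_zero_iff, sub_ne_zero] at h
  intro i j hij
  fin_cases i <;> fin_cases j <;> simp_all

theorem mem_of_generators_mem {S : Type*} [SetLike S L] [SubfieldClass S L] {F : S}
    (hy : IsGeneric y) (h2 : (2 : L) ≠ 0) (hF : ∀ i, (rotInvariants y).generators i ∈ F) :
    (rotInvariants y).P ∈ F ∧ (rotInvariants y).e ∈ F ∧ (rotInvariants y).h ∈ F ∧
      (rotInvariants y).n ∈ F :=
  RotInvariants.mem_of_generators_mem h2 hy.P_ne_zero hy.e_ne_zero hy.e_add_ne_zero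
    hy.disc_ne_zero hy.den_ne_zero (RotInvariants.P_mul_den hy.P_ne_zero hy.disc_ne_zero
      (RotInvariants.relation y hy.P_ne_zero hy.P_ne_Q_pow)) hF

variable {K : Type*} [Field K] [Algebra K L] {F : IntermediateField K L} {d : ℕ}

theorem rank_le_of_rotSum_mem (hy : IsGeneric y) (h2 : (2 : L) ≠ 0)
    (hF : ∀ i, (rotInvariants y).generators i ∈ F) (hV : ∀ i, rotSum y i ∈ F)
    (h : ∀ F', F ≤ F' → (∀ i, y i ∈ F') → Module.rank F' L ≤ d) :
    Module.rank F L ≤ (2 * d : ℕ) := by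
  have hQ : quatNorm y ∈ F := hF 0
  obtain ⟨hP, he, hh, hn⟩ := hy.mem_of_generators_mem h2 hF
  have hD := rotDiag_mem hQ hP he hh hn hV hy.rotSum_ne_zero hy.rotSum_sq_injective
  refine rank_le_mul_of_isRoot (θ := y 2) ![-y 2 ^ 2, 0] ?_ ?_
    fun F' hF' hy2 => h F' hF' fun i => ?_
  · simpa [Fin.forall_fin_succ] using sq_mem_of_rotDiag_mem h2 hQ hD 2
  · simp [Fin.sum_univ_succ]
  · refine mem_of_mul_mem hy.ne_zero hy2 (mul_comm (y i) _ ▸ hF' ?_)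
    exact mul_mem_of_rotSum_mem h2 hQ hD hV hy.rotOffDiagMul_ne_zero hy.sq_injective i

theorem rank_le_of_rotSum_zero_mem (hy : IsGeneric y) (h2 : (2 : L) ≠ 0)
    (hF : ∀ i, (rotInvariants y).generators i ∈ F) (h0 : rotSum y 0 ∈ F)
    (h : ∀ F', F ≤ F' → (∀ i, y i ∈ F') → Module.rank F' L ≤ d) :
    Module.rank F L ≤ (4 * (2 * d) : ℕ) := by
  have hQ : (rotInvariants y).Q ∈ F := hF 0
  have hP : rotSum y 0 * rotSum y 1 * rotSum y 2 ∈ F := (hy.mem_of_generators_mem h2 hF).1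
  have hV0 := hy.rotSum_ne_zero
  refine rank_le_mul_of_isRoot (θ := rotSum y 1) ![(rotSum y 1 * rotSum y 2) ^ 2, 0,
    rotSum y 0 ^ 2 - 3 * (rotInvariants y).Q ^ 2, 0] ?_ ?_ fun F' hF' h1 => ?_
  · simp only [Fin.forall_fin_succ, Matrix.cons_val_zero, Matrix.cons_val_succ, zero_mem,
      true_and, IsEmpty.forall_iff, and_true]
    exact ⟨pow_mem (mem_of_mul_mem (hV0 0) h0 (mul_assoc (rotSum y 0) _ _ ▸ hP)) 2,
      sub_mem (pow_mem h0 2) (mul_mem (ofNat_mem F 3) (pow_mem hQ 2))⟩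
  · simp only [Fin.sum_univ_four, Matrix.cons_val, ← rotSum_sq_add_add y, Fin.coe_ofNat_eq_mod]
    ring
  have h2F : rotSum y 2 ∈ F' :=
    mem_of_mul_mem (mul_ne_zero (hV0 0) (hV0 1)) (mul_mem (hF' h0) h1) (hF' hP)
  exact rank_le_of_rotSum_mem hy h2 (fun i => hF' (hF i))
    (by simpa [Fin.forall_fin_succ] using ⟨hF' h0, h1, h2F⟩) fun F'' hF'' => h F'' (hF'.trans hF'')

theorem rank_le_of_generators_mem (hy : IsGeneric y) (h2 : (2 : L) ≠ 0)
    (hF : ∀ i, (rotInvariants y).generators i ∈ F)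
    (h : ∀ F', F ≤ F' → (∀ i, y i ∈ F') → Module.rank F' L ≤ d) :
    Module.rank F L ≤ (48 * d : ℕ) := by
  have hQ : (rotInvariants y).Q ∈ F := hF 0
  obtain ⟨hP, he, -⟩ := hy.mem_of_generators_mem h2 hF
  rw [show 48 * d = 6 * (4 * (2 * d)) by ring]
  refine rank_le_mul_of_isRoot (θ := rotSum y 0) ![-(rotInvariants y).P ^ 2, 0,
    (rotInvariants y).e, 0, -(3 * (rotInvariants y).Q ^ 2), 0] ?_ ?_ fun F' hF' h0 => ?_
  · simp only [Fin.forall_fin_succ, Matrix.cons_val_zero, Matrix.cons_val_succ, zero_mem, he,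
      true_and, IsEmpty.forall_iff, and_true]
    exact ⟨neg_mem (pow_mem hP 2), neg_mem (mul_mem (ofNat_mem F 3) (pow_mem hQ 2))⟩
  · simp only [Fin.sum_univ_six, Matrix.cons_val, ← rotSum_sq_add_add y, Fin.coe_ofNat_eq_mod]
    simp only [rotInvariants]
    ring
  exact rank_le_of_rotSum_zero_mem hy h2 (fun i => hF' (hF i)) h0 fun F'' hF'' =>
    h F'' (hF'.trans hF'')

end IsGeneric

end OddDegree

section OddCase

section RingHom

/-- The image of a tuple of values of the basic invariants under a map. -/
def RotInvariants.map {R S : Type*} (f : R → S) (I : RotInvariants R) : RotInvariants S :=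
  ⟨f I.Q, f I.P, f I.e, f I.h, f I.n⟩

variable {R S Φ : Type*} [CommRing R] [CommRing S] [FunLike Φ R S] [RingHomClass Φ R S] (φ : Φ)

theorem RotInvariants.map_disc (I : RotInvariants R) : (I.map φ).disc = φ I.disc := by
  simp [disc, map, map_ofNat]

theorem RotInvariants.map_wNum (I : RotInvariants R) : (I.map φ).wNum = φ I.wNum := by
  simp [wNum, map, map_ofNat]

theorem RotInvariants.map_denNum (I : RotInvariants R) : (I.map φ).denNum = φ I.denNum := by
  simp only [denNum, map_disc, map_wNum]
  simp [map, map_ofNat]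

theorem RotInvariants.map_generators {L L' Φ : Type*} [Field L] [Field L'] [FunLike Φ L L']
    [RingHomClass Φ L L'] (φ : Φ) (I : RotInvariants L) (i : Fin 4) :
    (I.map φ).generators i = φ (I.generators i) := by
  fin_cases i <;> simp only [generators, m, w, p, map_disc, map_wNum] <;> simp [map, map_ofNat]

theorem rotInvariants_comp (y : Fin 4 → R) : rotInvariants (φ ∘ y) = (rotInvariants y).map φ := by
  ext <;> simp [rotInvariants, RotInvariants.map, quatNorm, rotSum, rotDiag, Fin.sum_univ_three,
    map_ofNat]

theorem rotOffDiagMul_comp (y : Fin 4 → R) (i : Fin 3) :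
    rotOffDiagMul (φ ∘ y) i = φ (rotOffDiagMul y i) := by
  fin_cases i <;> simp [rotOffDiagMul]

end RingHom

/-- A point at which `Q` and `P` vanish, but neither `e` nor `disc` nor `denNum` does. -/
theorem rotInvariants_of_sq_eq_neg_one {R : Type*} [CommRing R] {ι : R} (hι : ι ^ 2 = -1) :
    rotInvariants ![1, 1, -ι, -ι] = ⟨0, 0, 1024, 16 + 16 * ι, 512 * (ι - 1)⟩ := by
  have hD : rotDiag ![1, 1, -ι, -ι] = ![0, 0, -4] := by
    ext i; fin_cases i <;> simp [rotDiag]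
    linear_combination 2 * hι
  have hV : rotSum ![1, 1, -ι, -ι] = ![0, 4 - 4 * ι, -4 - 4 * ι] := by
    rw [rotSum, hD]
    ext i; fin_cases i <;> simp <;> grind
  have hQ : quatNorm ![1, 1, -ι, -ι] = 0 := by
    simp only [quatNorm, Matrix.cons_val]; linear_combination 2 * hι
  ext <;> simp only [rotInvariants, hD, hV, hQ, Fin.sum_univ_three, Matrix.cons_val]
  · ring
  · linear_combination 256 * (ι ^ 2 - 3) * hι
  · ring
  · linear_combination 256 * (ι + 3) * hι

variable {K : Type} [Field K]

theorem rotInvariants_eq_map_aeval {S : Type*} [CommRing S] [Algebra K S] (a : Fin 4 → S) :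
    rotInvariants a = (rotInvariants (MvPolynomial.X (R := K))).map (MvPolynomial.aeval a) := by
  rw [← rotInvariants_comp]
  congr 1
  ext i
  simp

namespace GeneratesWithSums

variable {z : Fin 4 → RFF K (Fin 8)}

theorem sq_injective (hz : GeneratesWithSums z) : Function.Injective (z ^ 2) := by
  intro i j hij
  by_contra hne
  have h := hz.aeval_ne_zero (S := K) (p := MvPolynomial.X i ^ 2 - MvPolynomial.X j ^ 2)
    (Pi.single i 1) (by simp [Ne.symm hne])
  simp only [map_sub, map_pow, MvPolynomial.aeval_X, sub_ne_zero] at h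
  exact h hij

theorem rotOffDiagMul_ne_zero (hz : GeneratesWithSums z) (i : Fin 3) : rotOffDiagMul z i ≠ 0 := by
  have haeval {S : Type} [CommRing S] [Algebra K S] (a : Fin 4 → S) :
      MvPolynomial.aeval a (rotOffDiagMul (MvPolynomial.X (R := K)) i) = rotOffDiagMul a i := by
    rw [← rotOffDiagMul_comp]
    congr 1
    ext i
    simp
  rw [← haeval]
  refine hz.aeval_ne_zero (S := K) ![0, 1, 1, 1] ?_
  rw [haeval]
  fin_cases i <;> simp [rotOffDiagMul]

theorem P_ne_zero_and_P_ne_Q_pow (hz : GeneratesWithSums z) (h2 : (2 : K) ≠ 0) :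
    (rotInvariants z).P ≠ 0 ∧ (rotInvariants z).P ≠ (rotInvariants z).Q ^ 3 := by
  let I := rotInvariants (MvPolynomial.X (R := K))
  have hP {S : Type} [CommRing S] [Algebra K S] (a : Fin 4 → S) :
      MvPolynomial.aeval a I.P = (rotInvariants a).P :=
    (congrArg RotInvariants.P (rotInvariants_eq_map_aeval a)).symm
  have hQ {S : Type} [CommRing S] [Algebra K S] (a : Fin 4 → S) :
      MvPolynomial.aeval a I.Q = (rotInvariants a).Q :=
    (congrArg RotInvariants.Q (rotInvariants_eq_map_aeval a)).symm
  constructor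
  · rw [← hP]
    refine hz.aeval_ne_zero (S := K) ![1, 0, 0, 0] ?_
    simp [hP, rotInvariants, rotSum, rotDiag]
  · rw [← sub_ne_zero, ← hP, ← hQ, ← map_pow, ← map_sub]
    refine hz.aeval_ne_zero (S := K) ![3, 1, 1, 1] ?_
    rw [map_sub, map_pow, hP, hQ]
    convert neg_ne_zero.2 (pow_ne_zero 11 h2) using 1
    simp only [rotInvariants, rotSum, rotDiag, quatNorm, Matrix.cons_val]
    norm_num

theorem e_disc_denNum_ne_zero (hz : GeneratesWithSums z) (h2 : (2 : K) ≠ 0) :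
    (rotInvariants z).e ≠ 0 ∧
      (rotInvariants z).e + 3 * (rotInvariants z).P * (rotInvariants z).Q ≠ 0 ∧
      (rotInvariants z).disc ≠ 0 ∧ (rotInvariants z).denNum ≠ 0 := by
  obtain ⟨ι, hι⟩ := IsAlgClosed.exists_pow_nat_eq (-1 : AlgebraicClosure K) two_pos
  have h2' : (2 : AlgebraicClosure K) ≠ 0 := by
    rw [← map_ofNat (algebraMap K (AlgebraicClosure K)) 2]
    exact (map_ne_zero _).2 h2
  have hι0 : ι ≠ 0 := fun h => by simp [h] at hι
  let I := rotInvariants (MvPolynomial.X (R := K))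
  let a : Fin 4 → AlgebraicClosure K := ![1, 1, -ι, -ι]
  have ha : I.map (MvPolynomial.aeval a) = ⟨0, 0, 1024, 16 + 16 * ι, 512 * (ι - 1)⟩ := by
    rw [← rotInvariants_eq_map_aeval, rotInvariants_of_sq_eq_neg_one hι]
  have hQ : MvPolynomial.aeval a I.Q = 0 := congrArg RotInvariants.Q ha
  have he : MvPolynomial.aeval a I.e = 2 ^ 10 :=
    (congrArg RotInvariants.e ha).trans (by norm_num)
  have hdisc : MvPolynomial.aeval a I.disc = 2 ^ 32 := by
    rw [← RotInvariants.map_disc, ha, RotInvariants.disc]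
    norm_num
  have hden : MvPolynomial.aeval a I.denNum = -2 ^ 93 * ι := by
    rw [← RotInvariants.map_denNum, ha, RotInvariants.denNum, RotInvariants.disc,
      RotInvariants.wNum]
    linear_combination (-3 * 2 ^ 92) * hι
  rw [rotInvariants_eq_map_aeval (K := K) z, RotInvariants.map_disc, RotInvariants.map_denNum]
  refine ⟨hz.aeval_ne_zero a (he ▸ pow_ne_zero 10 h2'), ?_,
    hz.aeval_ne_zero a (hdisc ▸ pow_ne_zero 32 h2'),
    hz.aeval_ne_zero a (hden ▸ mul_ne_zero (neg_ne_zero.2 (pow_ne_zero 93 h2')) hι0)⟩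
  have h := hz.aeval_ne_zero a (p := I.e + 3 * I.P * I.Q) (by simp [he, hQ, h2'])
  simpa [RotInvariants.map, map_ofNat] using h

theorem isGeneric (hz : GeneratesWithSums z) (h2 : (2 : K) ≠ 0) : IsGeneric z := by
  obtain ⟨hP, hPQ⟩ := hz.P_ne_zero_and_P_ne_Q_pow h2
  obtain ⟨he, hePQ, hdisc, hden⟩ := hz.e_disc_denNum_ne_zero h2
  refine ⟨hP, hPQ, he, hePQ, hdisc, fun h => hden ?_, hz.rotOffDiagMul_ne_zero, hz.sq_injective,
    hz.algebraicIndependent.ne_zero 2⟩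
  rw [← RotInvariants.den_mul hP hdisc, h, zero_mul]

end GeneratesWithSums

variable (K) in
/-- The differences `y_i = x_i - x_{i+4}`, which `G₂₃` permutes up to sign. -/
def pairDiff (i : Fin 4) : RFF K (Fin 8) := loVar K i - hiVar K i

theorem theta_pairDiff : permHom K (Fin 8) theta ∘ pairDiff K =
    ![pairDiff K 1, pairDiff K 2, pairDiff K 3, -pairDiff K 0] := by
  have hlo := congrFun (theta_loVar (K := K))
  have hhi := congrFun (theta_hiVar (K := K))
  simp only [Function.comp_apply] at hlo hhi
  funext i
  rw [Function.comp_apply, pairDiff, map_sub, hlo, hhi]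
  fin_cases i <;> simp [pairDiff]

theorem phi_pairDiff : permHom K (Fin 8) phi ∘ pairDiff K =
    ![pairDiff K 1, pairDiff K 3, pairDiff K 2, pairDiff K 0] := by
  have hlo := congrFun (phi_loVar (K := K))
  have hhi := congrFun (phi_hiVar (K := K))
  simp only [Function.comp_apply] at hlo hhi
  funext i
  rw [Function.comp_apply, pairDiff, map_sub, hlo, hhi]
  fin_cases i <;> simp [pairDiff]

theorem generatesWithSums_pairDiff (h2 : (2 : K) ≠ 0) : GeneratesWithSums (pairDiff K) := by
  refine generatesWithSums_of_loVar_mem fun F i hy hs => ?_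
  have h2' : algebraMap K (RFF K (Fin 8)) 2 ≠ 0 := (map_ne_zero _).2 h2
  refine mem_of_mul_mem h2' (F.algebraMap_mem 2) ?_
  rw [show algebraMap K (RFF K (Fin 8)) 2 * loVar K i = pairSum K i + pairDiff K i by
    rw [pairSum, pairDiff, map_ofNat]; ring]
  exact add_mem hs hy

theorem isRatExt_fixedSub_of_two_ne_zero (h2 : (2 : K) ≠ 0) :
    IsRatExt K (fixedSub K (Fin 8) G23) := by
  have hz := generatesWithSums_pairDiff h2
  have hy := hz.isGeneric h2
  have h2' : (2 : RFF K (Fin 8)) ≠ 0 := by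
    rw [← map_ofNat (algebraMap K (RFF K (Fin 8))) 2]
    exact (map_ne_zero _).2 h2
  have hc {σ : RFF K (Fin 8) ≃ₐ[K] RFF K (Fin 8)}
      (hσ : rotInvariants (σ ∘ pairDiff K) = rotInvariants (pairDiff K)) (i : Fin 4) :
      σ ((rotInvariants (pairDiff K)).generators i) =
        (rotInvariants (pairDiff K)).generators i := by
    conv_rhs => rw [← hσ]
    rw [rotInvariants_comp, RotInvariants.map_generators]
  have hYz i : (pairDiff K ^ 2) i ∈ IntermediateField.adjoin K (Set.range (pairDiff K)) :=
    pow_mem (IntermediateField.subset_adjoin K _ (Set.mem_range_self i)) 2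
  refine isRatExt_of_degree_le (Y := pairDiff K ^ 2) hz
    (hc (by rw [theta_pairDiff, rotInvariants_theta]))
    (hc (by rw [phi_pairDiff, rotInvariants_phi]))
    ?_ ?_ hYz hy.sq_injective fun F hF h => ?_
  · intro i
    rw [Pi.pow_apply, map_pow,
      ← Function.comp_apply (f := permHom K (Fin 8) theta), theta_pairDiff]
    fin_cases i <;> simp
  · intro i
    rw [Pi.pow_apply, map_pow,
      ← Function.comp_apply (f := permHom K (Fin 8) phi), phi_pairDiff]
    fin_cases i <;> rfl
  · exact_mod_cast hy.rank_le_of_generators_mem (d := 1) h2' hF (by exact_mod_cast h)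

end OddCase

section Cubic

section CommRing

variable {R : Type*} [CommRing R] (C : Fin 3 → R)

/-- The second elementary symmetric function of three elements. -/
def cubicE2 : R := C 0 * C 1 + C 0 * C 2 + C 1 * C 2

/-- The cyclic sum `C₀²C₁ + C₁²C₂ + C₂²C₀`. -/
def cyclicSum : R := C 0 ^ 2 * C 1 + C 1 ^ 2 * C 2 + C 2 ^ 2 * C 0

/-- The product of the sums of two elements among three; in characteristic two it is the square
root of the discriminant of the cubic polynomial with these roots. -/
def sumProd : R := (C 0 + C 1) * (C 1 + C 2) * (C 0 + C 2)

theorem prod_eq_sum_mul_cubicE2_sub_sumProd :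
    C 0 * C 1 * C 2 = (∑ i, C i) * cubicE2 C - sumProd C := by
  simp only [Fin.sum_univ_three, cubicE2, sumProd]
  ring

variable [CharP R 2]

theorem cyclicSum_swap : cyclicSum ![C 0, C 2, C 1] = cyclicSum C + sumProd C := by
  simp only [cyclicSum, sumProd, Matrix.cons_val]
  grind

theorem cyclicSum_sq_add_mul_sumProd :
    cyclicSum C ^ 2 + cyclicSum C * sumProd C + sumProd C ^ 2 =
      (∑ i, C i) ^ 3 * sumProd C + (∑ i, C i) ^ 4 * cubicE2 C + (∑ i, C i) ^ 2 * cubicE2 C ^ 2 +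
        cubicE2 C ^ 3 := by
  simp only [cyclicSum, sumProd, cubicE2, Fin.sum_univ_three]
  grind

end CommRing

/-- `cyclicSum C / sumProd C` is the Artin-Schreier resolvent of the cubic polynomial with the
roots `C`. -/
theorem cyclicSum_div_sumProd_sq_add {L : Type*} [Field L] [CharP L 2] {C : Fin 3 → L} {s G ε : L}
    (hs : s ≠ 0) (hg : sumProd C ≠ 0) (hsum : ∑ i, C i = s) (hG : G = sumProd C / s ^ 3)
    (hε : ε = cubicE2 C / s ^ 2) :
    (cyclicSum C / sumProd C) ^ 2 + cyclicSum C / sumProd C + 1 =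
      (G + ε + ε ^ 2 + ε ^ 3) / G ^ 2 := by
  have h := cyclicSum_sq_add_mul_sumProd C
  rw [hsum] at h
  rw [hG, hε]
  field_simp
  linear_combination h

theorem rank_le_of_roots_mem {K L : Type*} [Field K] [Field L] [Algebra K L]
    {F : IntermediateField K L} {q : Fin 3 → L} {d : ℕ} (hsum : ∑ i, q i ∈ F)
    (hE2 : cubicE2 q ∈ F) (hprod : q 0 * q 1 * q 2 ∈ F)
    (h : ∀ F', F ≤ F' → (∀ i, q i ∈ F') → Module.rank F' L ≤ d) :
    Module.rank F L ≤ (3 * (2 * d) : ℕ) := by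
  refine rank_le_mul_of_isRoot (θ := q 0) ![-(q 0 * q 1 * q 2), cubicE2 q, -∑ i, q i] ?_ ?_
    fun F₁ h₁ h0 => ?_
  · simpa [Fin.forall_fin_succ] using ⟨hprod, hE2, hsum⟩
  · simp only [Fin.sum_univ_three, Matrix.cons_val, cubicE2, Fin.coe_ofNat_eq_mod]
    ring
  have h12 : ∑ i, q i - q 0 ∈ F₁ := sub_mem (h₁ hsum) h0
  refine rank_le_mul_of_isRoot (θ := q 1)
    ![cubicE2 q - q 0 * (∑ i, q i - q 0), -(∑ i, q i - q 0)] ?_ ?_ fun F₂ h₂ h1 => ?_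
  · rw [Fin.forall_fin_two]
    exact ⟨sub_mem (h₁ hE2) (mul_mem h0 h12), neg_mem h12⟩
  · simp only [Fin.sum_univ_two, Fin.sum_univ_three, Matrix.cons_val, cubicE2,
      Fin.coe_ofNat_eq_mod]
    ring
  have h2 : q 2 ∈ F₂ := by
    rw [← add_sub_cancel_left (q 0 + q 1) (q 2), ← Fin.sum_univ_three]
    exact sub_mem (h₂ (h₁ hsum)) (add_mem (h₂ h0) h1)
  exact h F₂ (h₁.trans h₂) (by simpa [Fin.forall_fin_succ] using ⟨h₂ h0, h1, h2⟩)

end Cubic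

section CharTwoInvariants

section CommRing

variable {R : Type*} [CommRing R]

/-- The Artin-Schreier operator. -/
def artinSchreier (x : R) : R := x ^ 2 + x

/-- The translation invariant coordinates of `u`; in characteristic two their sum is `∑ u_i`. -/
def translCoord (u : Fin 4 → R) : Fin 3 → R := ![u 0 + u 2, u 1 + u 2, u 3 + u 2]

/-- The invariants of the quaternion subgroup of `G₂₃` which `G₂₃` permutes, acting through `S₃`. -/
def quatInvariant (u : Fin 4 → R) (i : Fin 3) : R :=
  artinSchreier (translCoord u i) * (artinSchreier (∑ j, u j) + 1) +
    artinSchreier (∑ j, u j) *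
      ((∑ j, u j + 1) * translCoord u i + translCoord u (i + 1) + ∑ j, u j)

/-- The sum of the `℘(u_i) ℘(u_j)` over all pairs `i < j`. -/
def artinSchreierE2 (u : Fin 4 → R) : R :=
  artinSchreier (u 0) * artinSchreier (u 1) + artinSchreier (u 0) * artinSchreier (u 2) +
    artinSchreier (u 0) * artinSchreier (u 3) + artinSchreier (u 1) * artinSchreier (u 2) +
    artinSchreier (u 1) * artinSchreier (u 3) + artinSchreier (u 2) * artinSchreier (u 3)

theorem sum_theta (u : Fin 4 → R) : ∑ i, ![u 1, u 2, u 3, u 0 + 1] i = ∑ i, u i + 1 := by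
  simp only [Fin.sum_univ_four, Matrix.cons_val]
  ring

theorem sum_phi (u : Fin 4 → R) : ∑ i, ![u 1, u 3, u 2, u 0] i = ∑ i, u i := by
  simp only [Fin.sum_univ_four, Matrix.cons_val]
  ring

theorem quatInvariant_phi (u : Fin 4 → R) : quatInvariant ![u 1, u 3, u 2, u 0] =
    ![quatInvariant u 1, quatInvariant u 2, quatInvariant u 0] := by
  have ha : translCoord ![u 1, u 3, u 2, u 0] =
    ![translCoord u 1, translCoord u 2, translCoord u 0] := rfl
  funext i
  fin_cases i <;> simp [quatInvariant, sum_phi, ha]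

theorem quatInvariant_comp {S Φ : Type*} [CommRing S] [FunLike Φ R S] [RingHomClass Φ R S] (φ : Φ)
    (u : Fin 4 → R) : quatInvariant (φ ∘ u) = φ ∘ quatInvariant u := by
  have ha i : translCoord (φ ∘ u) i = φ (translCoord u i) := by
    fin_cases i <;> simp [translCoord]
  funext i
  simp [quatInvariant, artinSchreier, ha]

variable [CharP R 2]

theorem sum_translCoord (u : Fin 4 → R) : ∑ i, translCoord u i = ∑ i, u i := by
  simp only [Fin.sum_univ_three, Fin.sum_univ_four, translCoord, Matrix.cons_val]
  grind

theorem artinSchreier_add_one (x : R) : artinSchreier (x + 1) = artinSchreier x := by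
  simp only [artinSchreier]
  grind

theorem sum_quatInvariant (u : Fin 4 → R) :
    ∑ i, quatInvariant u i = artinSchreier (∑ i, u i) := by
  have h := sum_translCoord u
  have h3 : (2 : Fin 3) + 1 = 0 := rfl
  simp only [Fin.sum_univ_three, quatInvariant, artinSchreier, zero_add, h3] at h ⊢
  rw [← h]
  grind

theorem quatInvariant_theta (u : Fin 4 → R) : quatInvariant ![u 1, u 2, u 3, u 0 + 1] =
    ![quatInvariant u 0, quatInvariant u 2, quatInvariant u 1] := by
  have ha : translCoord ![u 1, u 2, u 3, u 0 + 1] =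
      ![translCoord u 0 + ∑ i, u i, translCoord u 2, translCoord u 1 + ∑ i, u i + 1] := by
    simp only [translCoord, Fin.sum_univ_four, Matrix.cons_val, Matrix.vecCons_inj, and_true]
    exact ⟨by grind, add_comm _ _, by grind⟩
  have h := sum_translCoord u
  have h3 : (2 : Fin 3) + 1 = 0 := rfl
  funext i
  rw [quatInvariant, sum_theta, artinSchreier_add_one, ha]
  rw [Fin.sum_univ_three] at h
  fin_cases i <;> simp [quatInvariant, artinSchreier, h3] <;> grind

end CommRing

section Field

variable {L : Type*} [Field L]

/-- The generators of the field of invariants in characteristic two. -/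
def charTwoGenerators (u : Fin 4 → L) : Fin 4 → L :=
  ![∑ i, u i + cyclicSum (quatInvariant u) / sumProd (quatInvariant u),
    sumProd (quatInvariant u) / artinSchreier (∑ i, u i) ^ 3,
    cubicE2 (quatInvariant u) / artinSchreier (∑ i, u i) ^ 2, artinSchreierE2 u]

theorem charTwoGenerators_phi (u : Fin 4 → L) :
    charTwoGenerators ![u 1, u 3, u 2, u 0] = charTwoGenerators u := by
  have hc : cyclicSum ![quatInvariant u 1, quatInvariant u 2, quatInvariant u 0] =
      cyclicSum (quatInvariant u) := by
    simp only [cyclicSum, Matrix.cons_val]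
    ring
  have hp : sumProd ![quatInvariant u 1, quatInvariant u 2, quatInvariant u 0] =
      sumProd (quatInvariant u) := by
    simp only [sumProd, Matrix.cons_val]
    ring
  have he : cubicE2 ![quatInvariant u 1, quatInvariant u 2, quatInvariant u 0] =
      cubicE2 (quatInvariant u) := by
    simp only [cubicE2, Matrix.cons_val]
    ring
  rw [charTwoGenerators, sum_phi, quatInvariant_phi, hc, hp, he, charTwoGenerators]
  congr! 4
  simp only [artinSchreierE2, Matrix.cons_val]
  ring

theorem charTwoGenerators_theta [CharP L 2] {u : Fin 4 → L} (hg : sumProd (quatInvariant u) ≠ 0) :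
    charTwoGenerators ![u 1, u 2, u 3, u 0 + 1] = charTwoGenerators u := by
  have hp : sumProd ![quatInvariant u 0, quatInvariant u 2, quatInvariant u 1] =
      sumProd (quatInvariant u) := by
    simp only [sumProd, Matrix.cons_val]
    ring
  have he : cubicE2 ![quatInvariant u 0, quatInvariant u 2, quatInvariant u 1] =
      cubicE2 (quatInvariant u) := by
    simp only [cubicE2, Matrix.cons_val]
    ring
  have hσ : ∑ i, u i + 1 + (cyclicSum (quatInvariant u) + sumProd (quatInvariant u)) /
      sumProd (quatInvariant u) = ∑ i, u i +
        cyclicSum (quatInvariant u) / sumProd (quatInvariant u) := by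
    rw [add_div, div_self hg]
    linear_combination CharTwo.add_self_eq_zero (1 : L)
  rw [charTwoGenerators, sum_theta, quatInvariant_theta, cyclicSum_swap, hp, he, hσ,
    artinSchreier_add_one, charTwoGenerators]
  congr! 4
  simp only [artinSchreierE2, Matrix.cons_val, artinSchreier_add_one]
  ring

theorem charTwoGenerators_comp {L' Φ : Type*} [Field L'] [FunLike Φ L L'] [RingHomClass Φ L L']
    (φ : Φ) (u : Fin 4 → L) (i : Fin 4) :
    charTwoGenerators (φ ∘ u) i = φ (charTwoGenerators u i) := by
  simp only [charTwoGenerators, quatInvariant_comp]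
  fin_cases i <;> simp [cyclicSum, sumProd, cubicE2, artinSchreier, artinSchreierE2]

end Field

end CharTwoInvariants

section CharTwoDegree

variable {L : Type*} [Field L]

theorem quatInvariant_div {u : Fin 4 → L} (hs : artinSchreier (∑ i, u i) + 1 ≠ 0) (i : Fin 3) :
    quatInvariant u i / (artinSchreier (∑ i, u i) + 1) = artinSchreier (translCoord u i) +
      artinSchreier (∑ i, u i) / (artinSchreier (∑ i, u i) + 1) *
        ((∑ i, u i + 1) * translCoord u i + translCoord u (i + 1) + ∑ i, u i) := by
  rw [quatInvariant]
  field_simp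

variable [CharP L 2]

theorem quartic_of_artinSchreier {k σ C₀ C₁ a₀ a₁ a₂ : L} (h : a₀ + a₁ + a₂ = σ)
    (hC₀ : C₀ = artinSchreier a₀ + k * ((σ + 1) * a₀ + a₁ + σ))
    (hC₁ : C₁ = artinSchreier a₁ + k * ((σ + 1) * a₁ + a₂ + σ)) :
    a₀ ^ 4 + ((1 + k * (σ + 1)) ^ 2 + k * (1 + k * σ)) * a₀ ^ 2 +
      (k * (1 + k * σ) * (1 + k * (σ + 1)) + k ^ 3) * a₀ +
        ((C₀ + k * σ) ^ 2 + k * (1 + k * σ) * (C₀ + k * σ) + k ^ 2 * C₁) = 0 := by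
  subst h hC₀ hC₁
  simp only [artinSchreier]
  grind

theorem artinSchreier_mul_sum_add (u : Fin 4 → L) :
    artinSchreier (u 2) * artinSchreier (∑ i, u i) + artinSchreierE2 u +
      cubicE2 (artinSchreier ∘ translCoord u) = 0 := by
  simp only [artinSchreierE2, cubicE2, translCoord, artinSchreier, Function.comp_apply,
    Fin.sum_univ_four, Matrix.cons_val]
  grind

theorem sum_add_cyclicSum_div_relation {u : Fin 4 → L} (hs : artinSchreier (∑ i, u i) ≠ 0)
    (hg : sumProd (quatInvariant u) ≠ 0) :
    artinSchreier (∑ i, u i) + 1 = artinSchreier (charTwoGenerators u 0) +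
      (charTwoGenerators u 1 + charTwoGenerators u 2 + charTwoGenerators u 2 ^ 2 +
        charTwoGenerators u 2 ^ 3) / charTwoGenerators u 1 ^ 2 := by
  rw [← cyclicSum_div_sumProd_sq_add (G := charTwoGenerators u 1) (ε := charTwoGenerators u 2) hs hg
    (sum_quatInvariant u) rfl rfl]
  simp only [charTwoGenerators, Matrix.cons_val_zero, artinSchreier]
  grind

theorem mem_of_charTwoGenerators_mem {S : Type*} [SetLike S L] [SubfieldClass S L] {F : S}
    {u : Fin 4 → L} (hs : artinSchreier (∑ i, u i) ≠ 0) (hg : sumProd (quatInvariant u) ≠ 0)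
    (hF : ∀ i, charTwoGenerators u i ∈ F) :
    artinSchreier (∑ i, u i) ∈ F ∧ sumProd (quatInvariant u) ∈ F ∧
      cubicE2 (quatInvariant u) ∈ F := by
  have hsF : artinSchreier (∑ i, u i) ∈ F := by
    rw [← add_sub_cancel_right (artinSchreier (∑ i, u i)) 1, sum_add_cyclicSum_div_relation hs hg,
      artinSchreier]
    apply_rules [add_mem, sub_mem, div_mem, pow_mem, one_mem]
  refine ⟨hsF, ?_, ?_⟩
  · rw [← div_mul_cancel₀ (sumProd (quatInvariant u)) (pow_ne_zero 3 hs)]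
    exact mul_mem (hF 1) (pow_mem hsF 3)
  · rw [← div_mul_cancel₀ (cubicE2 (quatInvariant u)) (pow_ne_zero 2 hs)]
    exact mul_mem (hF 2) (pow_mem hsF 2)

theorem translCoord_mem {S : Type*} [SetLike S L] [SubfieldClass S L] {F : S} {u : Fin 4 → L}
    (hs : artinSchreier (∑ i, u i) ≠ 0)
    (hσ : ∑ i, u i ∈ F) (hq : quatInvariant u 0 ∈ F) (h0 : translCoord u 0 ∈ F) (i : Fin 3) :
    translCoord u i ∈ F := by
  have hA {x : L} (hx : x ∈ F) : artinSchreier x ∈ F := add_mem (pow_mem hx 2) hx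
  have h1 : translCoord u 1 ∈ F := by
    refine mem_of_mul_mem hs (hA hσ) ?_
    rw [show artinSchreier (∑ i, u i) * translCoord u 1 = quatInvariant u 0 -
        artinSchreier (translCoord u 0) * (artinSchreier (∑ i, u i) + 1) -
          artinSchreier (∑ i, u i) * ((∑ i, u i + 1) * translCoord u 0 + ∑ i, u i) by
      rw [quatInvariant, zero_add]; ring]
    exact sub_mem (sub_mem hq (mul_mem (hA h0) (add_mem (hA hσ) (one_mem F))))
      (mul_mem (hA hσ) (add_mem (mul_mem (add_mem hσ (one_mem F)) h0) hσ))
  have h2 : translCoord u 2 ∈ F := by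
    have hsum := sum_translCoord u
    rw [Fin.sum_univ_three] at hsum
    rw [← add_sub_cancel_left (translCoord u 0 + translCoord u 1) (translCoord u 2), hsum]
    exact sub_mem hσ (add_mem h0 h1)
  fin_cases i
  exacts [h0, h1, h2]

variable {K : Type*} [Field K] [Algebra K L] {F : IntermediateField K L} {u : Fin 4 → L} {d : ℕ}

theorem rank_le_of_translCoord_mem (hs : artinSchreier (∑ i, u i) ≠ 0)
    (hE : artinSchreierE2 u ∈ F) (ha : ∀ i, translCoord u i ∈ F)
    (h : ∀ F', F ≤ F' → (∀ i, u i ∈ F') → Module.rank F' L ≤ d) :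
    Module.rank F L ≤ (2 * d : ℕ) := by
  have hA i : artinSchreier (translCoord u i) ∈ F := add_mem (pow_mem (ha i) 2) (ha i)
  have hsF : artinSchreier (∑ i, u i) ∈ F := by
    rw [← sum_translCoord]
    exact add_mem (pow_mem (sum_mem fun i _ => ha i) 2) (sum_mem fun i _ => ha i)
  have hc : cubicE2 (artinSchreier ∘ translCoord u) ∈ F :=
    add_mem (add_mem (mul_mem (hA 0) (hA 1)) (mul_mem (hA 0) (hA 2))) (mul_mem (hA 1) (hA 2))
  refine rank_le_mul_of_isRoot (θ := u 2) ![(artinSchreierE2 u +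
    cubicE2 (artinSchreier ∘ translCoord u)) / artinSchreier (∑ i, u i), 1] ?_ ?_
    fun F' hF' h2 => h F' hF' ?_
  · simpa [Fin.forall_fin_succ] using div_mem (add_mem hE hc) hsF
  · have := artinSchreier_mul_sum_add u
    simp only [Fin.sum_univ_two, Matrix.cons_val, Fin.coe_ofNat_eq_mod]
    rw [artinSchreier] at this
    field_simp
    linear_combination this
  · have hu {x : L} (hx : x + u 2 ∈ F) : x ∈ F' := by
      simpa using sub_mem (hF' hx) h2
    simpa [Fin.forall_fin_succ] using ⟨hu (ha 0), hu (ha 1), h2, hu (ha 2)⟩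

theorem rank_le_of_quatInvariant_mem (hs : artinSchreier (∑ i, u i) ≠ 0)
    (hs1 : artinSchreier (∑ i, u i) + 1 ≠ 0) (hσ : ∑ i, u i ∈ F) (hE : artinSchreierE2 u ∈ F)
    (hq : ∀ i, quatInvariant u i ∈ F)
    (h : ∀ F', F ≤ F' → (∀ i, u i ∈ F') → Module.rank F' L ≤ d) :
    Module.rank F L ≤ (4 * (2 * d) : ℕ) := by
  have h1 : (1 : L) ∈ F := one_mem F
  have hsF : artinSchreier (∑ i, u i) ∈ F := add_mem (pow_mem hσ 2) hσ
  have hsum := sum_translCoord u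
  rw [Fin.sum_univ_three] at hsum
  have hC := quatInvariant_div hs1
  set σ := ∑ i, u i
  set k := artinSchreier σ / (artinSchreier σ + 1)
  set C : Fin 3 → L := fun i => quatInvariant u i / (artinSchreier σ + 1)
  have hk : k ∈ F := div_mem hsF (add_mem hsF h1)
  have hCF i : C i ∈ F := div_mem (hq i) (add_mem hsF h1)
  refine rank_le_mul_of_isRoot (θ := translCoord u 0)
    ![(C 0 + k * σ) ^ 2 + k * (1 + k * σ) * (C 0 + k * σ) + k ^ 2 * C 1,
      k * (1 + k * σ) * (1 + k * (σ + 1)) + k ^ 3, (1 + k * (σ + 1)) ^ 2 + k * (1 + k * σ), 0]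
    ?_ ?_ fun F' hF' h0 => ?_
  · simp only [Fin.forall_fin_succ, Matrix.cons_val_zero, Matrix.cons_val_succ, zero_mem,
      IsEmpty.forall_iff, and_true]
    refine ⟨?_, ?_, ?_⟩ <;> apply_rules [add_mem, mul_mem, pow_mem, hCF]
  · simp only [Fin.sum_univ_four, Matrix.cons_val, Fin.coe_ofNat_eq_mod]
    linear_combination quartic_of_artinSchreier hsum (hC 0) (hC 1)
  exact rank_le_of_translCoord_mem hs (hF' hE) (translCoord_mem hs (hF' hσ) (hF' (hq 0)) h0)
    fun F'' hF'' => h F'' (hF'.trans hF'')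

theorem rank_le_of_charTwoGenerators_mem (hs : artinSchreier (∑ i, u i) ≠ 0)
    (hs1 : artinSchreier (∑ i, u i) + 1 ≠ 0) (hg : sumProd (quatInvariant u) ≠ 0)
    (hF : ∀ i, charTwoGenerators u i ∈ F)
    (h : ∀ F', F ≤ F' → (∀ i, u i ∈ F') → Module.rank F' L ≤ d) :
    Module.rank F L ≤ (48 * d : ℕ) := by
  obtain ⟨hsF, hgF, he⟩ := mem_of_charTwoGenerators_mem hs hg hF
  have hsum : ∑ i, quatInvariant u i ∈ F := (sum_quatInvariant u).symm ▸ hsF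
  have hprod : quatInvariant u 0 * quatInvariant u 1 * quatInvariant u 2 ∈ F := by
    rw [prod_eq_sum_mul_cubicE2_sub_sumProd]
    exact sub_mem (mul_mem hsum he) hgF
  rw [show 48 * d = 3 * (2 * (4 * (2 * d))) by ring]
  refine rank_le_of_roots_mem hsum he hprod fun F' hF' hq => ?_
  have hT : cyclicSum (quatInvariant u) ∈ F' :=
    add_mem (add_mem (mul_mem (pow_mem (hq 0) 2) (hq 1)) (mul_mem (pow_mem (hq 1) 2) (hq 2)))
      (mul_mem (pow_mem (hq 2) 2) (hq 0))
  have hσ : ∑ i, u i ∈ F' := by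
    rw [← add_sub_cancel_right (∑ i, u i)
      (cyclicSum (quatInvariant u) / sumProd (quatInvariant u))]
    exact sub_mem (hF' (hF 0)) (div_mem hT (hF' hgF))
  exact rank_le_of_quatInvariant_mem hs hs1 hσ (hF' (hF 3)) hq fun F'' hF'' =>
    h F'' (hF'.trans hF'')

end CharTwoDegree

section CharTwoCase

variable (K : Type) [Field K]

/-- The fractions `u_i = x_i / (x_i + x_{i+4})`; in characteristic two `G₂₃` permutes them up to
addition of `1`. -/
def ratio (i : Fin 4) : RFF K (Fin 8) := loVar K i / pairSum K i

variable {K}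

theorem phi_ratio : permHom K (Fin 8) phi ∘ ratio K =
    ![ratio K 1, ratio K 3, ratio K 2, ratio K 0] := by
  have hlo := congrFun (phi_loVar (K := K))
  simp only [Function.comp_apply] at hlo
  funext i
  rw [Function.comp_apply, ratio, map_div₀, hlo, phi_pairSum]
  fin_cases i <;> rfl

theorem aeval_quatInvariant {S : Type*} [CommRing S] [Algebra K S] (a : Fin 4 → S) (i : Fin 3) :
    MvPolynomial.aeval a (quatInvariant (MvPolynomial.X (R := K)) i) = quatInvariant a i := by
  have ha : MvPolynomial.aeval a ∘ MvPolynomial.X (R := K) = a :=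
    funext (MvPolynomial.aeval_X a)
  rw [← Function.comp_apply (f := MvPolynomial.aeval a), ← quatInvariant_comp, ha]

theorem generatesWithSums_ratio : GeneratesWithSums (ratio K) := by
  refine generatesWithSums_of_loVar_mem fun F i hu hs => ?_
  rw [← div_mul_cancel₀ (loVar K i) (pairSum_ne_zero i)]
  exact mul_mem hu hs

theorem GeneratesWithSums.artinSchreier_sum_ne_zero {z : Fin 4 → RFF K (Fin 8)}
    (hz : GeneratesWithSums z) :
    artinSchreier (∑ i, z i) ≠ 0 ∧ artinSchreier (∑ i, z i) + 1 ≠ 0 := by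
  let p : MvPolynomial (Fin 4) K := ∑ i, MvPolynomial.X i
  have h0 := hz.aeval_ne_zero (S := K) (p := p) (Pi.single 0 1) (by simp [p])
  have h1 := hz.aeval_ne_zero (S := K) (p := p + 1) 0 (by simp [p])
  have h2 := hz.aeval_ne_zero (S := K) (p := artinSchreier p + 1) 0 (by simp [p, artinSchreier])
  constructor
  · convert mul_ne_zero h0 h1 using 1
    simp [p, artinSchreier]
    ring
  · simpa [p, artinSchreier] using h2

variable [CharP K 2]

instance charP_RFF : CharP (RFF K (Fin 8)) 2 :=
  charP_of_injective_algebraMap (algebraMap K (RFF K (Fin 8))).injective 2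

theorem theta_ratio : permHom K (Fin 8) theta ∘ ratio K =
    ![ratio K 1, ratio K 2, ratio K 3, ratio K 0 + 1] := by
  have hlo := congrFun (theta_loVar (K := K))
  simp only [Function.comp_apply] at hlo
  have hhi : hiVar K 0 / pairSum K 0 = ratio K 0 + 1 := by
    rw [ratio, div_add_one (pairSum_ne_zero 0), pairSum]
    congr 1
    grind
  funext i
  rw [Function.comp_apply, ratio, map_div₀, hlo, theta_pairSum]
  fin_cases i
  exacts [rfl, rfl, rfl, hhi]

namespace GeneratesWithSums

variable {z : Fin 4 → RFF K (Fin 8)}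

theorem artinSchreier_injective (hz : GeneratesWithSums z) :
    Function.Injective (artinSchreier ∘ z) := by
  intro i j hij
  by_contra hne
  let p : MvPolynomial (Fin 4) K := MvPolynomial.X i + MvPolynomial.X j
  have h0 := hz.aeval_ne_zero (S := K) (p := p) (Pi.single i 1) (by simp [p, Ne.symm hne])
  have h1 := hz.aeval_ne_zero (S := K) (p := p + 1) 0 (by simp [p])
  refine mul_ne_zero h0 h1 ?_
  simp only [Function.comp_apply, artinSchreier] at hij
  simp only [p, map_add, MvPolynomial.aeval_X, map_one]
  grind

theorem sumProd_quatInvariant_ne_zero (hz : GeneratesWithSums z) :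
    sumProd (quatInvariant z) ≠ 0 := by
  obtain ⟨ω, hω⟩ := IsAlgClosed.exists_root (Polynomial.cyclotomic 3 (AlgebraicClosure K))
    (by rw [Polynomial.degree_cyclotomic]; decide)
  simp only [Polynomial.IsRoot, Polynomial.cyclotomic_three, Polynomial.eval_add,
    Polynomial.eval_pow, Polynomial.eval_X, Polynomial.eval_one] at hω
  have hq : quatInvariant ![ω, 0, 0, 0] = ![ω ^ 2, ω, 0] := by
    funext i
    fin_cases i <;> simp [quatInvariant, translCoord, artinSchreier, Fin.sum_univ_four] <;> grind
  have h := hz.aeval_ne_zero (p := sumProd (quatInvariant (MvPolynomial.X (R := K)))) ![ω, 0, 0, 0]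
  simp only [sumProd, map_mul, map_add, aeval_quatInvariant] at h
  refine h ?_
  simp only [hq, Matrix.cons_val]
  rw [show (ω ^ 2 + ω) * (ω + 0) * (ω ^ 2 + 0) = 1 by grind]
  exact one_ne_zero

end GeneratesWithSums

theorem isRatExt_fixedSub_of_charP_two : IsRatExt K (fixedSub K (Fin 8) G23) := by
  have hz := generatesWithSums_ratio (K := K)
  obtain ⟨hs, hs1⟩ := hz.artinSchreier_sum_ne_zero
  have hg := hz.sumProd_quatInvariant_ne_zero
  have hcomp (σ : RFF K (Fin 8) ≃ₐ[K] RFF K (Fin 8)) (i : Fin 4) :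
      σ ((artinSchreier ∘ ratio K) i) = artinSchreier ((σ ∘ ratio K) i) := by
    simp [artinSchreier]
  refine isRatExt_of_degree_le (c := charTwoGenerators (ratio K)) (Y := artinSchreier ∘ ratio K) hz
    ?_ ?_ ?_ ?_ ?_ hz.artinSchreier_injective fun F hF h => ?_
  · intro i
    rw [← charTwoGenerators_comp, theta_ratio, charTwoGenerators_theta hg]
  · intro i
    rw [← charTwoGenerators_comp, phi_ratio, charTwoGenerators_phi]
  · intro i
    rw [hcomp, theta_ratio]
    fin_cases i
    exacts [rfl, rfl, rfl, artinSchreier_add_one _]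
  · intro i
    rw [hcomp, phi_ratio]
    fin_cases i <;> rfl
  · intro i
    have hu := IntermediateField.subset_adjoin K _ (Set.mem_range_self (f := ratio K) i)
    exact add_mem (pow_mem hu 2) hu
  · exact_mod_cast rank_le_of_charTwoGenerators_mem (d := 1) hs hs1 hg hF (by exact_mod_cast h)

end CharTwoCase

/-- **Rationality for `G₂₃ ≃ GL(2,3)`.** For any field `K`, the subgroup `G₂₃ ⊆ S₈` generated by `Θ = (1,2,3,4,5,6,7,8)` and `Φ = (1,2,4)(5,6,8)` (of order 48, isomorphic to `GL(2,3)`; indices written `0,…,7`) has `K`-rational fixed field `K(x₁,…,x₈)^{G₂₃}`. -/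
theorem rationality_G23 (K : Type) [Field K] :
    IsRatExt K ↥(fixedSub K (Fin 8) (Subgroup.closure
      {finRotate 8,
       (Equiv.swap (0 : Fin 8) 1 * Equiv.swap 1 3) * (Equiv.swap (4 : Fin 8) 5 * Equiv.swap 5 7)})) := by
  by_cases h2 : (2 : K) = 0
  · have := CharTwo.of_one_ne_zero_of_two_eq_zero one_ne_zero h2
    exact isRatExt_fixedSub_of_charP_two
  · exact isRatExt_fixedSub_of_two_ne_zero h2
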